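/- arXiv:2311.00992 — 2 statements merged into one kernel-verified Lean document; each statement's English description precedes it below -/
import Mathlib

section
/- For any positive integer n with n ∉ {1, 3}, there exists a Latin square of order n that has no orthogonal mate, i.e., there is no Latin square of order n orthogonal to it. -/
/-- A Latin square of order `n`: each symbol occurs exactly once in each row
and exactly once in each column. -/
def IsLatinSquare {n : ℕ} (A : Fin n → Fin n → Fin n) : Prop :=
  (∀ i, Function.Bijective fun j => A i j) ∧ (∀ j, Function.Bijective fun i => A i j)

/-- Two Latin squares are orthogonal: every ordered pair of symbols occurs
exactly once among the superimposed pairs. -/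
def IsOrthogonal {n : ℕ} (A B : Fin n → Fin n → Fin n) : Prop :=
  ∀ p : Fin n × Fin n, ∃! q : Fin n × Fin n, (A q.1 q.2, B q.1 q.2) = p


/-- A mate gives, through every cell, a transversal. -/
theorem exists_transversal {n : ℕ} {A B : Fin n → Fin n → Fin n}
    (hB : IsLatinSquare B) (hAB : IsOrthogonal A B) (r c : Fin n) :
    ∃ t : Fin n → Fin n, t r = c ∧ Function.Bijective t ∧
      Function.Bijective (fun i => A i (t i)) := by
  obtain ⟨hrow, hcol⟩ := hB
  choose t ht using fun i => (hrow i).2 (B r c)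
  simp only at ht
  refine ⟨t, (hrow r).1 (ht r), Finite.injective_iff_bijective.1 ?_,
    Finite.injective_iff_bijective.1 ?_⟩
  · intro i j hij
    apply (hcol (t i)).1
    change B i (t i) = B j (t i)
    rw [ht i, hij, ht j]
  · intro i j hij
    have h := (hAB (A i (t i), B r c)).unique (y₁ := (i, t i)) (y₂ := (j, t j))
      (by simp [ht]) (by simp only [ht]; simpa using hij.symm)
    exact congrArg Prod.fst h

/-- The sum of the deviations from the cyclic square along a transversal. -/
theorem sum_deviation {n : ℕ} (A : Fin n → Fin n) (t : Fin n → Fin n)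
    (ht : Function.Bijective t) (hA : Function.Bijective A) :
    2 * ∑ i, (((A i : ℕ) : ℤ) - (i : ℕ) - (t i : ℕ)) = -((n : ℤ) * (n - 1)) := by
  have e1 : ∑ i, ((A i : ℕ) : ℤ) = ∑ i : Fin n, ((i : ℕ) : ℤ) :=
    hA.sum_comp (fun x : Fin n => ((x : ℕ) : ℤ))
  have e2 : ∑ i, ((t i : ℕ) : ℤ) = ∑ i : Fin n, ((i : ℕ) : ℤ) :=
    ht.sum_comp (fun x : Fin n => ((x : ℕ) : ℤ))
  rw [Finset.sum_sub_distrib, Finset.sum_sub_distrib, e1, e2]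
  have e3 : (∑ i : Fin n, ((i : ℕ) : ℤ)) * 2 = (n : ℤ) * (n - 1) := by
    rw [Fin.sum_univ_eq_sum_range (fun i => (i : ℤ))]
    clear * -
    induction n with
    | zero => simp
    | succ k ih => rw [Finset.sum_range_succ, add_mul, ih]; push_cast; ring
  linarith

/-- The cyclic square. -/
def cycEntry (n i j : ℕ) : ℕ := if i + j < n then i + j else i + j - n

/-- The cyclic square of odd order, with rows 0, 1, 2 modified. -/
def oddEntry (n i j : ℕ) : ℕ :=
  if i = 0 then
    (if j = 0 then 1 else if j % 2 = 1 then (if j + 2 = n then 0 else j + 2) else j)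
  else if i = 1 then (if j = 0 then 0 else if j + 1 = n then 1 else j + 1)
  else if i = 2 then (if j % 2 = 1 then j else if j + 1 = n then 0 else j + 2)
  else cycEntry n i j

theorem isLatin_of {n : ℕ} (A : Fin n → Fin n → Fin n)
    (h1 : ∀ i j j', A i j = A i j' → j = j') (h2 : ∀ j i i', A i j = A i' j → i = i') :
    IsLatinSquare A :=
  ⟨fun i => Finite.injective_iff_bijective.1 fun j j' h => h1 i j j' h,
   fun j => Finite.injective_iff_bijective.1 fun i i' h => h2 j i i' h⟩

theorem even_case (k : ℕ) (hk : 0 < k) :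
    ∃ A : Fin (2 * k) → Fin (2 * k) → Fin (2 * k), IsLatinSquare A ∧
      ∀ B : Fin (2 * k) → Fin (2 * k) → Fin (2 * k), IsLatinSquare B → ¬ IsOrthogonal A B := by
  refine ⟨fun i j => ⟨cycEntry (2 * k) i j, by unfold cycEntry; split_ifs <;> omega⟩,
    isLatin_of _ ?_ ?_, ?_⟩
  · intro i j j' h
    simp only [Fin.mk.injEq, cycEntry] at h
    ext; split_ifs at h <;> omega
  · intro i j j' h
    simp only [Fin.mk.injEq, cycEntry] at h
    ext; split_ifs at h <;> omega
  · intro B hB hAB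
    obtain ⟨t, -, ht, hA⟩ := exists_transversal hB hAB ⟨0, by omega⟩ ⟨0, by omega⟩
    have hs := sum_deviation _ t ht hA
    have hd : ((2 * k : ℕ) : ℤ) ∣ ∑ i : Fin (2 * k),
        (((cycEntry (2 * k) i (t i) : ℕ) : ℤ) - (i : ℕ) - (t i : ℕ)) := by
      refine Finset.dvd_sum fun i _ => ?_
      unfold cycEntry
      split_ifs with h
      · exact ⟨0, by push_cast; ring⟩
      · exact ⟨-1, by push_cast [Nat.cast_sub (not_lt.1 h)]; ring⟩
    obtain ⟨c, hc⟩ := hd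
    simp only [hc] at hs
    have hk' : (2 * (k : ℤ)) ≠ 0 := by positivity
    have : 2 * c = -(2 * (k : ℤ) - 1) := by
      apply mul_left_cancel₀ hk'
      push_cast at hs
      linarith
    omega

theorem odd_case (k : ℕ) (hk : 2 ≤ k) :
    ∃ A : Fin (2 * k + 1) → Fin (2 * k + 1) → Fin (2 * k + 1), IsLatinSquare A ∧
      ∀ B : Fin (2 * k + 1) → Fin (2 * k + 1) → Fin (2 * k + 1),
        IsLatinSquare B → ¬ IsOrthogonal A B := by
  refine ⟨fun i j => ⟨oddEntry (2 * k + 1) i j, ?_⟩, isLatin_of _ ?_ ?_, ?_⟩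
  · unfold oddEntry cycEntry; split_ifs <;> omega
  · intro i j j' h
    simp only [Fin.mk.injEq] at h
    obtain ⟨i, hi⟩ := i
    obtain ⟨j, hj⟩ := j
    obtain ⟨j', hj'⟩ := j'
    simp only [Fin.mk.injEq] at h ⊢
    unfold oddEntry cycEntry at h
    by_cases h0 : i = 0
    · simp only [h0, if_true] at h; split_ifs at h <;> omega
    by_cases h1 : i = 1
    · simp only [h1, if_true, one_ne_zero, if_false] at h; split_ifs at h <;> omega
    by_cases h2 : i = 2
    · subst h2; simp only [if_true, h0, h1, if_false] at h; split_ifs at h <;> omega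
    simp only [h0, h1, h2, if_false] at h; split_ifs at h <;> omega
  · intro j i i' h
    simp only [Fin.mk.injEq] at h
    obtain ⟨i, hi⟩ := i
    obtain ⟨j, hj⟩ := j
    obtain ⟨i', hi'⟩ := i'
    simp only [Fin.mk.injEq] at h ⊢
    unfold oddEntry cycEntry at h
    split_ifs at h <;> omega
  · intro B hB hAB
    obtain ⟨t, h10, ht, hA⟩ := exists_transversal hB hAB ⟨1, by omega⟩ ⟨0, by omega⟩
    have hs := sum_deviation _ t ht hA
    obtain ⟨m, rfl⟩ : ∃ m, k = m + 1 := ⟨k - 1, by omega⟩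
    have hA' := hA.1
    simp only at hs
    have e : ∀ f : Fin (2 * (m + 1) + 1) → ℤ, ∑ i, f i = f ⟨0, by omega⟩ + (f ⟨1, by omega⟩ +
        (f ⟨2, by omega⟩ + ∑ i : Fin (2 * m), f ⟨i + 3, by omega⟩)) := by
      intro f
      rw [Fin.sum_univ_succ]
      change _ + ∑ i : Fin (2 * m + 1 + 1), _ = _
      rw [Fin.sum_univ_succ, Fin.sum_univ_succ]
      rfl
    rw [e] at hs
    have hd : ((2 * (m + 1) + 1 : ℕ) : ℤ) ∣ ∑ i : Fin (2 * m),
        (((oddEntry (2 * (m + 1) + 1) (i + 3 : ℕ) (t ⟨i + 3, by omega⟩) : ℕ) : ℤ)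
          - ((i + 3 : ℕ) : ℤ) - (t ⟨i + 3, by omega⟩ : ℕ)) := by
      refine Finset.dvd_sum fun i _ => ?_
      have a0 : (i : ℕ) + 3 ≠ 0 := by omega
      have a1 : (i : ℕ) + 3 ≠ 1 := by omega
      have a2 : (i : ℕ) + 3 ≠ 2 := by omega
      unfold oddEntry cycEntry
      simp only [a0, a1, a2, if_false]
      split_ifs with h
      · exact ⟨0, by push_cast; ring⟩
      · exact ⟨-1, by rw [Nat.cast_sub (not_lt.1 h)]; push_cast; ring⟩
    obtain ⟨c, hc⟩ := hd
    simp only [hc] at hs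
    -- distinctness
    have n0 : t ⟨0, by omega⟩ ≠ t ⟨1, by omega⟩ := fun h => by simpa using ht.1 h
    have n2 : t ⟨2, by omega⟩ ≠ t ⟨1, by omega⟩ := fun h => by simpa using ht.1 h
    have v0 := hA'.ne (show (⟨0, by omega⟩ : Fin (2 * (m + 1) + 1)) ≠ ⟨1, by omega⟩ by simp)
    have v2 := hA'.ne (show (⟨2, by omega⟩ : Fin (2 * (m + 1) + 1)) ≠ ⟨1, by omega⟩ by simp)
    simp only [h10, ne_eq, Fin.ext_iff] at n0 n2 v0 v2 hs
    generalize ((t ⟨0, by omega⟩ : Fin (2 * (m + 1) + 1)) : ℕ) = x at *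
    generalize ((t ⟨2, by omega⟩ : Fin (2 * (m + 1) + 1)) : ℕ) = y at *
    have w1 : oddEntry (2 * (m + 1) + 1) 1 0 = 0 := by simp [oddEntry]
    rw [w1] at v0 v2 hs
    have d0 : oddEntry (2 * (m + 1) + 1) 0 x = x ∨ oddEntry (2 * (m + 1) + 1) 0 x = x + 2 := by
      unfold oddEntry at v0 ⊢
      simp only [if_true] at v0 ⊢
      split_ifs at v0 ⊢ <;> omega
    have d2 : oddEntry (2 * (m + 1) + 1) 2 y = y ∨ oddEntry (2 * (m + 1) + 1) 2 y = y + 2 := by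
      unfold oddEntry at v2 ⊢
      simp only [if_true, OfNat.ofNat_ne_zero, OfNat.ofNat_ne_one, if_false] at v2 ⊢
      split_ifs at v2 ⊢ <;> omega
    generalize oddEntry (2 * (m + 1) + 1) 0 x = X at *
    generalize oddEntry (2 * (m + 1) + 1) 2 y = Y at *
    have hm : ((2 * (m + 1) + 1 : ℕ) : ℤ) ∣ (X : ℤ) - x - 1 + (Y - 2 - y) := by
      refine ⟨-c - (m + 1), ?_⟩
      push_cast at hs ⊢
      linarith
    have hz := Int.eq_zero_of_abs_lt_dvd hm (by rw [abs_lt]; constructor <;> push_cast <;> omega)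
    omega

theorem no_orthogonal_mate (n : ℕ) (hn : 0 < n) (h1 : n ≠ 1) (h3 : n ≠ 3) :
    ∃ A : Fin n → Fin n → Fin n, IsLatinSquare A ∧
      ∀ B : Fin n → Fin n → Fin n, IsLatinSquare B → ¬ IsOrthogonal A B := by
  rcases Nat.even_or_odd' n with ⟨k, rfl | rfl⟩
  · exact even_case k (by omega)
  · exact odd_case k (by omega)
end

section
/- For any integer n ≥ 1, if there exists an r-self-orthogonal Latin square of order n, then n ≤ r ≤ n², r ∉ {n+1, n²−1}, and (n, r) is not one of the following 26 exceptional pairs: (2,4), (3,5), (3,6), (3,7), (3,9), (4,6), (4,7), (4,8), (4,10), (4,11), (4,12), (4,13), (4,14), (5,8), (5,9), (5,12), (5,16), (5,18), (5,20), (5,22), (5,23), (6,32), (6,33), (6,34), (6,36), (7,46). -/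
/-- The number of distinct ordered pairs obtained by superimposing `A` and `B`. -/
def orthCount {k n : ℕ} (A B : Fin k → Fin n → Fin n) : ℕ :=
  (Finset.univ.image fun q : Fin k × Fin n => (A q.1 q.2, B q.1 q.2)).card

/-! ## A kernel-friendly backtracking checker -/

namespace RSO

/-- Evaluate `n` to a literal before passing it on (for the kernel). -/
noncomputable def force {α : Type} (n : Nat) (k : Nat → α) : α :=
  Nat.rec (k 0) (fun m _ => k (Nat.succ m)) n

theorem force_eq {α : Type} (n : Nat) (k : Nat → α) : force n k = k n := by
  cases n <;> rfl

/-- Lookup table: a binary tree with thresholds at the nodes. -/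
inductive BT | leaf (v : Nat) | node (p : Nat) (l r : BT)

noncomputable def BT.get (t : BT) (m : Nat) : Nat :=
  BT.rec (fun v => v) (fun p _ _ gl gr => Bool.rec gl gr (Nat.ble p m)) t

/-- Build the table of the values `g o, …, g (o + 2^d - 1)` and pass it to `k`. -/
noncomputable def mkBT {α : Type} (g : Nat → Nat) (d : Nat) : Nat → (BT → α) → α :=
  Nat.rec (fun o k => force (g o) fun v => k (.leaf v))
    (fun d ih o k => ih o fun l => force (Nat.add o (Nat.pow 2 d)) fun o' => ih o' fun r =>
      k (.node o' l r)) d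

/-- Specification of `mkBT`. -/
def treeBT (g : Nat → Nat) : Nat → Nat → BT
  | 0, o => .leaf (g o)
  | d + 1, o => .node (o + 2 ^ d) (treeBT g d o) (treeBT g d (o + 2 ^ d))

theorem mkBT_eq {α : Type} (g : Nat → Nat) (d : Nat) : ∀ (o : Nat) (k : BT → α),
    mkBT g d o k = k (treeBT g d o) := by
  induction d with
  | zero => intro o k; simp [mkBT, force_eq, treeBT]
  | succ d ih =>
    intro o k
    have h : mkBT g (d + 1) o k = mkBT g d o fun l => force (Nat.add o (Nat.pow 2 d)) fun o' =>
      mkBT g d o' fun r => k (.node o' l r) := rfl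
    rw [h, ih, force_eq, ih]
    rfl

theorem get_node (p : Nat) (l r : BT) (m : Nat) :
    (BT.node p l r).get m = if p ≤ m then r.get m else l.get m := by
  have h : (BT.node p l r).get m = Bool.rec (l.get m) (r.get m) (Nat.ble p m) := rfl
  rw [h]
  cases hb : Nat.ble p m
  · rw [if_neg]; intro hle; rw [Nat.ble_eq_true_of_le hle] at hb; cases hb
  · rw [if_pos (Nat.le_of_ble_eq_true hb)]

theorem get_treeBT (g : Nat → Nat) (d : Nat) : ∀ (o m : Nat), o ≤ m → m < o + 2 ^ d →
    (treeBT g d o).get m = g m := by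
  induction d with
  | zero => intro o m h1 h2; have : o = m := by simp at h2; omega
            subst this; rfl
  | succ d ih =>
    intro o m h1 h2
    rw [pow_succ] at h2
    simp only [treeBT, get_node]
    split_ifs with h
    · exact ih _ _ h (by omega)
    · exact ih _ _ h1 (by omega)

theorem get_treeBT_ex (g : Nat → Nat) (d : Nat) : ∀ (o m : Nat),
    ∃ m', (treeBT g d o).get m = g m' := by
  induction d with
  | zero => intro o m; exact ⟨o, rfl⟩
  | succ d ih =>
    intro o m
    simp only [treeBT, get_node]
    split_ifs with h
    · exact ih _ _
    · exact ih _ _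

/-- Tree of options: a leaf holds the mask and the bit of an option;
a node holds the power of two separating its two halves. -/
inductive OT | leaf (nc bit : Nat) | node (p : Nat) (l r : OT)

noncomputable def OT.find {α : Type} (t : OT) (x : Nat) (k : Nat → Nat → α) : α :=
  OT.rec (fun nc bit => k nc bit) (fun p _ _ fl fr =>
    Bool.rec fl fr (Nat.ble p x)) t

/-- Tree for `2^d` options starting with number `o`. -/
noncomputable def mkOT {α : Type} (g : Nat → Nat) (d : Nat) : Nat → (OT → α) → α :=
  Nat.rec (fun o k => force (g o) fun v => force (Nat.pow 2 (Nat.add 64 o)) fun b => k (.leaf v b))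
    (fun d ih o k => ih o fun l => force (Nat.add o (Nat.pow 2 d)) fun o' => ih o' fun r =>
      force (Nat.pow 2 (Nat.add 64 o')) fun p => k (.node p l r)) d

/-- Specification of `mkOT`. -/
def treeOT (g : Nat → Nat) : Nat → Nat → OT
  | 0, o => .leaf (g o) (2 ^ (64 + o))
  | d + 1, o => .node (2 ^ (64 + (o + 2 ^ d))) (treeOT g d o) (treeOT g d (o + 2 ^ d))

theorem mkOT_eq {α : Type} (g : Nat → Nat) (d : Nat) : ∀ (o : Nat) (k : OT → α),
    mkOT g d o k = k (treeOT g d o) := by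
  induction d with
  | zero =>
    intro o k
    have h : mkOT g 0 o k = force (g o) fun v => force (Nat.pow 2 (Nat.add 64 o)) fun b =>
      k (.leaf v b) := rfl
    rw [h, force_eq, force_eq]; rfl
  | succ d ih =>
    intro o k
    have h : mkOT g (d + 1) o k = mkOT g d o fun l => force (Nat.add o (Nat.pow 2 d)) fun o' =>
      mkOT g d o' fun r => force (Nat.pow 2 (Nat.add 64 o')) fun p => k (.node p l r) := rfl
    rw [h, ih, force_eq, ih, force_eq]
    rfl

theorem find_treeOT {α : Type} (g : Nat → Nat) (d x : Nat) (k : Nat → Nat → α) : ∀ o : Nat,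
    ∃ o', (treeOT g d o).find x k = k (g o') (2 ^ (64 + o')) := by
  induction d with
  | zero => intro o; exact ⟨o, rfl⟩
  | succ d ih =>
    intro o
    have h : (treeOT g (d + 1) o).find x k = Bool.rec ((treeOT g d o).find x k)
      ((treeOT g d (o + 2 ^ d)).find x k) (Nat.ble (2 ^ (64 + (o + 2 ^ d))) x) := rfl
    rw [h]
    cases Nat.ble (2 ^ (64 + (o + 2 ^ d))) x
    · exact ih _
    · exact ih _

/-- Put a hash into the low 64 bits, which do not stand for options. -/
noncomputable def tag (x : Nat) : Nat := Nat.lor x (Nat.mod x 18446744073709551557)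

theorem testBit_tag (x o : Nat) : (tag x).testBit (64 + o) = x.testBit (64 + o) := by
  have h : tag x = x ||| (x % 18446744073709551557) := rfl
  have h2 : (x % 18446744073709551557).testBit (64 + o) = false := by
    apply Nat.testBit_lt_two_pow
    have h3 : x % 18446744073709551557 < 18446744073709551557 := Nat.mod_lt _ (by norm_num)
    have h4 : 2 ^ 64 ≤ 2 ^ (64 + o) := Nat.pow_le_pow_right (by norm_num) (by omega)
    have h5 : (18446744073709551557 : ℕ) < 2 ^ 64 := by norm_num
    omega
  rw [h, Nat.testBit_lor, h2, Bool.or_false]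

/-- The backtracking checker: `D` is the set of options still available, `x` the set of options
that remain to be refuted, and the list holds the (packed) names of the items to branch on.
The result is the remaining list, or `[]` on failure. -/
noncomputable def go (NC : OT) (IT : BT) (fuel : Nat) : Nat → Nat → List Nat → List Nat :=
  Nat.rec (fun _ _ _ => [])
    (fun _ ih D x h =>
      Bool.rec h
        (List.rec [] (fun b rest _ =>
          NC.find x fun nc bit =>
          force (tag (Nat.land D nc)) fun D' =>
          force (Nat.div b 256) fun b2 => force (Nat.mod b 256) fun b1 =>
          force (tag (Nat.land D' (IT.get b1))) fun x' =>
          List.rec [] (fun b3 rest3 _ =>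
              force (Nat.xor x bit) fun x2 => ih D x2 (b3 :: rest3))
            (ih D' x' (Nat.rec rest (fun _ _ => b2 :: rest) b2))) h)
        (Nat.ble 18446744073709551616 x)) fuel

theorem go_sound (g : Nat → Nat) (d : Nat) (IT : BT) (S : Set Nat)
    (H1 : ∀ o ∈ S, ∀ o' ∈ S, (g o).testBit (64 + o') = true)
    (H2 : ∀ m, ∃ o ∈ S, (IT.get m).testBit (64 + o) = true) (fuel : Nat) :
    ∀ (D x : Nat) (h : List Nat), go (treeOT g d 0) IT fuel D x h ≠ [] →
      (∀ o ∈ S, D.testBit (64 + o) = true) → ∀ o ∈ S, x.testBit (64 + o) = false := by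
  induction fuel with
  | zero => intro D x h hne; exact absurd rfl hne
  | succ f ih =>
    intro D x h hne hD o ho
    have e : go (treeOT g d 0) IT (f + 1) D x h = Bool.rec h
        (List.rec [] (fun b rest _ =>
          (treeOT g d 0).find x fun nc bit =>
          force (tag (Nat.land D nc)) fun D' =>
          force (Nat.div b 256) fun b2 => force (Nat.mod b 256) fun b1 =>
          force (tag (Nat.land D' (IT.get b1))) fun x' =>
          List.rec [] (fun b3 rest3 _ =>
              force (Nat.xor x bit) fun x2 => go (treeOT g d 0) IT f D x2 (b3 :: rest3))
            (go (treeOT g d 0) IT f D' x' (Nat.rec rest (fun _ _ => b2 :: rest) b2))) h)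
        (Nat.ble 18446744073709551616 x) := rfl
    rw [e] at hne
    cases hb : Nat.ble 18446744073709551616 x with
    | false =>
      apply Nat.testBit_lt_two_pow
      have h4 : 2 ^ 64 ≤ 2 ^ (64 + o) := Nat.pow_le_pow_right (by norm_num) (by omega)
      have h5 : ¬ 18446744073709551616 ≤ x := by
        intro hle; rw [Nat.ble_eq_true_of_le hle] at hb; cases hb
      have h6 : (18446744073709551616 : ℕ) = 2 ^ 64 := by norm_num
      omega
    | true =>
      rw [hb] at hne
      cases h with
      | nil => exact absurd rfl hne
      | cons b rest =>
        simp only [force_eq] at hne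
        obtain ⟨o0, h0⟩ := find_treeOT g d x (fun nc bit =>
          (List.rec [] (fun b3 rest3 _ =>
              go (treeOT g d 0) IT f D (Nat.xor x bit) (b3 :: rest3))
            (go (treeOT g d 0) IT f (tag (Nat.land D nc))
              (tag (Nat.land (tag (Nat.land D nc)) (IT.get (Nat.mod b 256))))
              (Nat.rec rest (fun _ _ => Nat.div b 256 :: rest) (Nat.div b 256))) : List Nat)) 0
        rw [h0] at hne
        generalize hr : go (treeOT g d 0) IT f (tag (Nat.land D (g o0)))
              (tag (Nat.land (tag (Nat.land D (g o0))) (IT.get (Nat.mod b 256))))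
              (Nat.rec rest (fun _ _ => Nat.div b 256 :: rest) (Nat.div b 256)) = r at hne
        cases r with
        | nil => exact absurd rfl hne
        | cons b3 rest3 =>
          by_cases ho0 : o = o0
          · subst ho0
            exfalso
            have hD' : ∀ o' ∈ S, (tag (Nat.land D (g o))).testBit (64 + o') = true := by
              intro o' ho'
              rw [testBit_tag]
              change (D &&& g o).testBit (64 + o') = true
              rw [Nat.testBit_land, hD o' ho', H1 o ho o' ho']; rfl
            have hx := ih _ _ _ (by rw [hr]; exact List.cons_ne_nil _ _) hD'
            obtain ⟨o', ho', hi⟩ := H2 (Nat.mod b 256)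
            have h1 := hx o' ho'
            rw [testBit_tag] at h1
            change (tag (Nat.land D (g o)) &&& IT.get (Nat.mod b 256)).testBit (64 + o') = false at h1
            rw [Nat.testBit_land, hD' o' ho', hi] at h1
            cases h1
          · have h1 := ih D _ _ hne hD o ho
            change (x ^^^ 2 ^ (64 + o0)).testBit (64 + o) = false at h1
            rw [Nat.testBit_xor, Nat.testBit_two_pow_of_ne (by omega)] at h1
            simpa using h1

end RSO

/-! ## The exact cover problem and soundness of the checker -/

namespace RSO

/-- Data prescribed for a square: diagonal, symbol pairs that cannot occur off the diagonal,
symbol pairs occurring exactly once, symbol pairs that occur, and a filter on options. -/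
structure Prob where
  n : Nat
  dg : Nat → Nat
  forb : Nat → Nat → Bool
  ex : Nat → Nat → Bool
  need : Nat → Nat → Bool
  allow : Nat → Nat → Nat → Nat → Bool

/-- The code of the option: `s` at `(i,j)` and `t` at `(j,i)`. -/
def enc (i j s t : Nat) : Nat := ((i * 8 + j) * 8 + s) * 8 + t

/-- Is the option with code `o` possible? -/
noncomputable def Prob.good (P : Prob) (o : Nat) : Bool :=
  force (Nat.div o 512) fun i => force (Nat.mod (Nat.div o 64) 8) fun j =>
  cond (Nat.ble (Nat.succ i) j) (cond (Nat.ble (Nat.succ j) P.n)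
  (force (Nat.mod (Nat.div o 8) 8) fun s => force (Nat.mod o 8) fun t =>
  cond (Nat.ble (Nat.succ s) P.n) (cond (Nat.ble (Nat.succ t) P.n)
  (cond (Nat.beq s (P.dg i)) false (cond (Nat.beq s (P.dg j)) false
  (cond (Nat.beq t (P.dg i)) false (cond (Nat.beq t (P.dg j)) false
  (cond (P.forb s t) false (P.allow i j s t))))))
  false) false) false) false

/-- The list of the numbers `b + m`, `m < N`, satisfying `f`, prepended to `acc`. -/
noncomputable def loop {α : Type} (f : Nat → Bool) (b N : Nat) : List Nat → (List Nat → α) → α :=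
  Nat.rec (fun acc k => k acc)
    (fun m ih acc k => force (Nat.add b m) fun o =>
      Bool.rec (ih acc k) (ih (o :: acc) k) (f o)) N

theorem loop_spec {α : Type} (f : Nat → Bool) (b N : Nat) : ∀ (acc : List Nat),
    ∃ l : List Nat, (∀ k : List Nat → α, loop f b N acc k = k l) ∧
      (∀ m ∈ acc, m ∈ l) ∧ ∀ m, m < N → f (b + m) = true → b + m ∈ l := by
  induction N with
  | zero => intro acc; exact ⟨acc, fun k => rfl, fun m h => h, fun m h => by omega⟩
  | succ N ih =>
    intro acc
    have e : ∀ k : List Nat → α, loop f b (N + 1) acc k =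
      Bool.rec (loop f b N acc k) (loop f b N ((b + N) :: acc) k) (f (b + N)) := fun k => by
        have e0 : loop f b (N + 1) acc k = force (Nat.add b N) fun o =>
          Bool.rec (loop f b N acc k) (loop f b N (o :: acc) k) (f o) := rfl
        rw [e0, force_eq]; rfl
    cases hb : f (b + N) with
    | false =>
      obtain ⟨l, h1, h2, h3⟩ := ih acc
      refine ⟨l, fun k => by rw [e, hb]; exact h1 k, h2, fun m hm hf => ?_⟩
      have : m ≠ N := by rintro rfl; rw [hb] at hf; cases hf
      exact h3 m (by omega) hf
    | true =>
      obtain ⟨l, h1, h2, h3⟩ := ih ((b + N) :: acc)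
      refine ⟨l, fun k => by rw [e, hb]; exact h1 k, fun m hm => h2 m (List.mem_cons_of_mem _ hm),
        fun m hm hf => ?_⟩
      by_cases hmN : m = N
      · subst hmN; exact h2 _ List.mem_cons_self
      · exact h3 m (by omega) hf

/-- Two-level version of `loop`, for the numbers below `64 * N`. -/
noncomputable def loop2 {α : Type} (f g : Nat → Bool) (N : Nat) :
    List Nat → (List Nat → α) → α :=
  Nat.rec (fun acc k => k acc)
    (fun m ih acc k => Bool.rec (ih acc k)
      (force (Nat.mul 64 m) fun b => loop f b 64 acc fun l => ih l k) (g m)) N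

theorem loop2_spec {α : Type} (f g : Nat → Bool) (N : Nat) : ∀ (acc : List Nat),
    ∃ l : List Nat, (∀ k : List Nat → α, loop2 f g N acc k = k l) ∧
      (∀ m ∈ acc, m ∈ l) ∧ ∀ m, m < 64 * N → g (m / 64) = true → f m = true → m ∈ l := by
  induction N with
  | zero => intro acc; exact ⟨acc, fun k => rfl, fun m h => h, fun m h => by omega⟩
  | succ N ih =>
    intro acc
    have e : ∀ k : List Nat → α, loop2 f g (N + 1) acc k =
      Bool.rec (loop2 f g N acc k) (force (Nat.mul 64 N) fun b => loop f b 64 acc fun l =>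
        loop2 f g N l k) (g N) := fun k => rfl
    cases hb : g N with
    | false =>
      obtain ⟨l, h1, h2, h3⟩ := ih acc
      refine ⟨l, fun k => by rw [e, hb]; exact h1 k, h2, fun m hm hg hf => ?_⟩
      have : m / 64 ≠ N := by intro h; rw [h, hb] at hg; cases hg
      exact h3 m (by omega) hg hf
    | true =>
      obtain ⟨l0, h1, h2, h3⟩ := loop_spec (α := α) f (64 * N) 64 acc
      obtain ⟨l, h4, h5, h6⟩ := ih l0
      refine ⟨l, fun k => ?_, fun m hm => h5 m (h2 m hm), fun m hm hg hf => ?_⟩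
      · rw [e, hb]
        simp only [force_eq]
        exact (h1 _).trans (h4 k)
      · by_cases hmN : m < 64 * N
        · exact h6 m hmN hg hf
        · have := h3 (m - 64 * N) (by omega)
          rw [show 64 * N + (m - 64 * N) = m by omega] at this
          exact h5 m (this hf)

/-- Is `64 * m` the code of a position pair `i < j < n`? -/
noncomputable def pairOK (n m : Nat) : Bool :=
  cond (Nat.ble (Nat.succ (Nat.div m 8)) (Nat.mod m 8)) (Nat.ble (Nat.succ (Nat.mod m 8)) n) false

/-- The mask of the options in `l` whose digit at place `d` is `v`. -/
noncomputable def dmask (d v : Nat) (l : List Nat) : Nat :=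
  List.rec 0 (fun o _ m => Bool.rec (Nat.mul 2 m) (Nat.succ (Nat.mul 2 m))
    (Nat.beq (Nat.mod (Nat.div o d) 8) v)) l

theorem testBit_dmask (d v : Nat) (l : List Nat) : ∀ (k o : Nat), l[k]? = some o →
    (dmask d v l).testBit k = decide (o / d % 8 = v) := by
  induction l with
  | nil => intro k o h; simp at h
  | cons a l ih =>
    intro k o h
    have e : dmask d v (a :: l) = Bool.rec (2 * dmask d v l) (2 * dmask d v l + 1)
      (Nat.beq (a / d % 8) v) := rfl
    cases k with
    | zero =>
      simp at h
      subst h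
      rw [e]
      cases hb : Nat.beq (a / d % 8) v with
      | false =>
        have : a / d % 8 ≠ v := Nat.ne_of_beq_eq_false hb
        simp [this]
      | true =>
        have : a / d % 8 = v := Nat.eq_of_beq_eq_true hb
        simp [this]
    | succ k =>
      simp at h
      rw [e, ← ih k o h, Nat.testBit_succ]
      cases hb : Nat.beq (a / d % 8) v with
      | false => simp
      | true =>
        congr 1
        change (2 * dmask d v l + 1) / 2 = _
        omega

noncomputable def getO (l : List Nat) (k : Nat) : Nat :=
  List.rec (fun _ => 0) (fun o _ ih k => Nat.rec o (fun m _ => ih m) k) l k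

theorem getO_eq (l : List Nat) : ∀ (k o : Nat), l[k]? = some o → getO l k = o := by
  induction l with
  | nil => intro k o h; simp at h
  | cons a l ih =>
    intro k o h
    cases k with
    | zero => simp at h; subst h; rfl
    | succ k => simp at h; exact ih k o h

/-- The options compatible with option number `k`, whose code is `o`. -/
noncomputable def ncMask (P : Prob) (DM : BT) (full : Nat) (k : Nat) (o : Nat) : Nat :=
  force (Nat.mod (Nat.div o 512) 8) fun i => force (Nat.mod (Nat.div o 64) 8) fun j =>
  force (Nat.mod (Nat.div o 8) 8) fun s => force (Nat.mod o 8) fun t =>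
  force (DM.get i) fun Ii => force (DM.get j) fun Ij =>
  force (DM.get (Nat.add 8 i)) fun Ji => force (DM.get (Nat.add 8 j)) fun Jj =>
  force (DM.get (Nat.add 16 s)) fun Ss => force (DM.get (Nat.add 16 t)) fun St =>
  force (DM.get (Nat.add 24 s)) fun Ts => force (DM.get (Nat.add 24 t)) fun Tt =>
  force (Nat.lor (Nat.land Ii Jj)
   (Nat.lor (Nat.lor (Nat.land Ii Ss) (Nat.land Ji Ts))
   (Nat.lor (Nat.lor (Nat.land Jj Ss) (Nat.land Ij Ts))
   (Nat.lor (Nat.lor (Nat.land Ij St) (Nat.land Jj Tt))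
   (Nat.lor (Nat.lor (Nat.land Ji St) (Nat.land Ii Tt))
   (cond (P.ex s t) (Nat.lor (Nat.land Ss Tt) (Nat.land St Ts)) 0)))))) fun c =>
  Nat.lor (Nat.xor full (Nat.land full c)) (Nat.pow 2 k)

/-- The options covering item `id`. -/
noncomputable def itMask (P : Prob) (DM : BT) (full : Nat) (id : Nat) : Nat :=
  force (Nat.div id 64) fun a => force (Nat.mod (Nat.div id 8) 8) fun x =>
  force (Nat.mod id 8) fun y =>
  cond (Nat.ble (Nat.succ x) P.n) (cond (Nat.ble (Nat.succ y) P.n)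
  (cond (Nat.beq a 0) (cond (Nat.ble (Nat.succ x) y)
    (Nat.land (DM.get x) (DM.get (Nat.add 8 y))) full)
  (cond (Nat.beq a 1) (cond (Nat.beq (P.dg x) y) full
    (Nat.lor (Nat.land (DM.get x) (DM.get (Nat.add 16 y)))
      (Nat.land (DM.get (Nat.add 8 x)) (DM.get (Nat.add 24 y)))))
  (cond (Nat.beq a 2) (cond (Nat.beq (P.dg x) y) full
    (Nat.lor (Nat.land (DM.get (Nat.add 8 x)) (DM.get (Nat.add 16 y)))
      (Nat.land (DM.get x) (DM.get (Nat.add 24 y)))))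
  (cond (P.need x y)
    (Nat.lor (Nat.land (DM.get (Nat.add 16 x)) (DM.get (Nat.add 24 y)))
      (Nat.land (DM.get (Nat.add 16 y)) (DM.get (Nat.add 24 x)))) full)))) full) full

/-- Shift by 64 bits. -/
noncomputable def sh64 (x : Nat) : Nat := Nat.mul x 18446744073709551616

theorem testBit_sh64 (x k : Nat) : (sh64 x).testBit (64 + k) = x.testBit k := by
  have h : sh64 x = x * 18446744073709551616 := rfl
  rw [h, show (18446744073709551616 : ℕ) = 2 ^ 64 by norm_num, Nat.testBit_mul_two_pow]
  simp

/-- Run the checker on the hints `h`. -/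
noncomputable def runAux (N fuel : Nat) (P : Prob) (d root : Nat) (h : List Nat) : Bool :=
  loop2 P.good (pairOK P.n) N [] fun l =>
  force (Nat.pred (Nat.pow 2 l.length)) fun full =>
  mkBT (fun m => dmask (Nat.pow 8 (Nat.sub 3 (Nat.div m 8))) (Nat.mod m 8) l) 5 0 fun DM =>
  mkOT (fun k => sh64 (ncMask P DM full k (getO l k))) d 0 fun NC =>
  mkBT (fun id => sh64 (itMask P DM full id)) 8 0 fun IT =>
  force (sh64 full) fun D =>
  force (Nat.land D (IT.get root)) fun x =>
  List.rec false (fun _ _ _ => true) (go NC IT fuel D x h)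

noncomputable def run (P : Prob) (d root : Nat) (h : List Nat) : Bool :=
  runAux 64 1000 P d root h

/-- A square with the prescribed data. -/
structure Fits (P : Prob) (n : ℕ) (A : Fin n → Fin n → Fin n) : Prop where
  hn : P.n = n
  h8 : n ≤ 8
  h0 : 2 ≤ n
  latin : IsLatinSquare A
  diag : ∀ i, ((A i i : Fin n) : ℕ) = P.dg i
  hforb : ∀ i j : Fin n, i < j → P.forb (A i j) (A j i) = false
  hex : ∀ i j i' j', P.ex (A i j) (A j i) = true → A i' j' = A i j → A j' i' = A j i →
    i' = i ∧ j' = j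
  hneed : ∀ s t : Fin n, P.need s t = true → ∃ i j, i ≠ j ∧ A i j = s ∧ A j i = t
  hallow : ∀ i j : Fin n, i < j → P.allow i j (A i j) (A j i) = true

section
variable {P : Prob} {n : ℕ} {A : Fin n → Fin n → Fin n}

theorem Fits.row (F : Fits P n A) {i j j' : Fin n} (h : A i j = A i j') : j = j' :=
  (F.latin.1 i).1 h

theorem Fits.col (F : Fits P n A) {i i' j : Fin n} (h : A i j = A i' j) : i = i' :=
  (F.latin.2 j).1 h

def encF (A : Fin n → Fin n → Fin n) (i j : Fin n) : ℕ := enc i j (A i j) (A j i)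

theorem digs (a b c d : ℕ) (hb : b < 8) (hc : c < 8) (hd : d < 8) :
    enc a b c d / 512 = a ∧ enc a b c d / 64 % 8 = b ∧ enc a b c d / 8 % 8 = c ∧
      enc a b c d % 8 = d := by
  unfold enc; omega

theorem Fits.good (F : Fits P n A) {i j : Fin n} (h : i < j) : P.good (encF A i j) = true := by
  have h8 := F.h8
  obtain ⟨e1, e2, e3, e4⟩ := digs i j (A i j) (A j i) (by omega) (by omega) (by omega)
  unfold Prob.good
  simp only [force_eq]
  change encF A i j / 512 = _ at e1
  change encF A i j / 64 % 8 = _ at e2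
  change encF A i j / 8 % 8 = _ at e3
  change encF A i j % 8 = _ at e4
  change (cond (Nat.ble (Nat.succ (encF A i j / 512)) (encF A i j / 64 % 8))
   (cond (Nat.ble (Nat.succ (encF A i j / 64 % 8)) P.n) 
  (cond (Nat.ble (Nat.succ (encF A i j / 8 % 8)) P.n) (cond (Nat.ble (Nat.succ (encF A i j % 8)) P.n)
  (cond (Nat.beq (encF A i j / 8 % 8) (P.dg (encF A i j / 512))) false
  (cond (Nat.beq (encF A i j / 8 % 8) (P.dg (encF A i j / 64 % 8))) false
  (cond (Nat.beq (encF A i j % 8) (P.dg (encF A i j / 512))) false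
  (cond (Nat.beq (encF A i j % 8) (P.dg (encF A i j / 64 % 8))) false
  (cond (P.forb (encF A i j / 8 % 8) (encF A i j % 8)) false
   (P.allow (encF A i j / 512) (encF A i j / 64 % 8) (encF A i j / 8 % 8) (encF A i j % 8)))))))
  false) false) false) false) = true
  have hne : i ≠ j := ne_of_lt h
  have n1 : (A i j : ℕ) ≠ (A i i : ℕ) := fun e => hne (F.row (Fin.ext e)).symm
  have n2 : (A i j : ℕ) ≠ (A j j : ℕ) := fun e => hne (F.col (Fin.ext e))
  have n3 : (A j i : ℕ) ≠ (A i i : ℕ) := fun e => hne (F.col (Fin.ext e)).symm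
  have n4 : (A j i : ℕ) ≠ (A j j : ℕ) := fun e => hne (F.row (Fin.ext e))
  have bf : ∀ a b : ℕ, a ≠ b → Nat.beq a b = false := fun a b hh => by
    cases hb : Nat.beq a b
    · rfl
    · exact absurd (Nat.eq_of_beq_eq_true hb) hh
  rw [e1, e2, e3, e4, ← F.diag i, ← F.diag j, bf _ _ n1, bf _ _ n2, bf _ _ n3, bf _ _ n4,
    F.hforb i j h, F.hallow i j h, F.hn, Nat.ble_eq_true_of_le (show Nat.succ i ≤ (j : ℕ) from h),
    Nat.ble_eq_true_of_le (show Nat.succ j ≤ n by omega),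
    Nat.ble_eq_true_of_le (show Nat.succ (A i j) ≤ n by omega),
    Nat.ble_eq_true_of_le (show Nat.succ (A j i) ≤ n by omega)]
  rfl

theorem Fits.it (F : Fits P n A) (DM : BT) (full : ℕ) (I : Fin n → Fin n → ℕ)
    (hfull : ∀ i j, i < j → full.testBit (I i j) = true)
    (h1 : ∀ i j v, i < j → v < 8 → (DM.get v).testBit (I i j) = decide ((i : ℕ) = v))
    (h2 : ∀ i j v, i < j → v < 8 → (DM.get (8 + v)).testBit (I i j) = decide ((j : ℕ) = v))
    (h3 : ∀ i j v, i < j → v < 8 →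
      (DM.get (16 + v)).testBit (I i j) = decide ((A i j : ℕ) = v))
    (h4 : ∀ i j v, i < j → v < 8 →
      (DM.get (24 + v)).testBit (I i j) = decide ((A j i : ℕ) = v)) (id : ℕ) :
    ∃ i j, i < j ∧ (itMask P DM full id).testBit (I i j) = true := by
  have h8 := F.h8
  have hF : ∃ i j, i < j ∧ full.testBit (I i j) = true :=
    ⟨⟨0, by have := F.h0; omega⟩, ⟨1, by have := F.h0; omega⟩, by simp,
      hfull _ _ (by simp)⟩
  unfold itMask
  simp only [force_eq]
  change ∃ i j, i < j ∧ (cond (Nat.ble (Nat.succ (id / 8 % 8)) P.n)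
    (cond (Nat.ble (Nat.succ (id % 8)) P.n)
  (cond (Nat.beq (id / 64) 0) (cond (Nat.ble (Nat.succ (id / 8 % 8)) (id % 8))
    ((DM.get (id / 8 % 8)) &&& (DM.get (8 + id % 8))) full)
  (cond (Nat.beq (id / 64) 1) (cond (Nat.beq (P.dg (id / 8 % 8)) (id % 8)) full
    (((DM.get (id / 8 % 8)) &&& (DM.get (16 + id % 8))) |||
      ((DM.get (8 + id / 8 % 8)) &&& (DM.get (24 + id % 8)))))
  (cond (Nat.beq (id / 64) 2) (cond (Nat.beq (P.dg (id / 8 % 8)) (id % 8)) full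
    (((DM.get (8 + id / 8 % 8)) &&& (DM.get (16 + id % 8))) |||
      ((DM.get (id / 8 % 8)) &&& (DM.get (24 + id % 8)))))
  (cond (P.need (id / 8 % 8) (id % 8))
    (((DM.get (16 + id / 8 % 8)) &&& (DM.get (24 + id % 8))) |||
      ((DM.get (16 + id % 8)) &&& (DM.get (24 + id / 8 % 8)))) full)))) full) full : ℕ).testBit (I i j) = true
  have hx8 : id / 8 % 8 < 8 := Nat.mod_lt _ (by norm_num)
  have hy8 : id % 8 < 8 := Nat.mod_lt _ (by norm_num)
  generalize id / 8 % 8 = x at *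
  generalize id % 8 = y at *
  cases hb1 : Nat.ble (Nat.succ x) P.n
  · exact hF
  cases hb2 : Nat.ble (Nat.succ y) P.n
  · exact hF
  have hxn : x < n := by have := Nat.le_of_ble_eq_true hb1; rw [F.hn] at this; exact this
  have hyn : y < n := by have := Nat.le_of_ble_eq_true hb2; rw [F.hn] at this; exact this
  cases Nat.beq (id / 64) 0
  · cases Nat.beq (id / 64) 1
    · cases Nat.beq (id / 64) 2
      · cases hb : P.need x y
        · exact hF
        · obtain ⟨i, j, hij, hs, ht⟩ := F.hneed ⟨x, hxn⟩ ⟨y, hyn⟩ hb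
          rcases lt_or_gt_of_ne hij with h | h
          · refine ⟨i, j, h, ?_⟩
            simp [Nat.testBit_lor, Nat.testBit_land, h3 i j _ h hx8, h4 i j _ h hy8, hs, ht]
          · refine ⟨j, i, h, ?_⟩
            simp [Nat.testBit_lor, Nat.testBit_land, h3 j i _ h hy8, h4 j i _ h hx8, hs, ht]
      · cases hb : Nat.beq (P.dg x) y
        · obtain ⟨i, hi⟩ := (F.latin.2 ⟨x, hxn⟩).2 ⟨y, hyn⟩
          simp only at hi
          have hne : i ≠ ⟨x, hxn⟩ := by
            rintro rfl
            have := F.diag ⟨x, hxn⟩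
            rw [hi] at this
            exact Nat.ne_of_beq_eq_false hb this.symm
          rcases lt_or_gt_of_ne hne with h | h
          · refine ⟨i, ⟨x, hxn⟩, h, ?_⟩
            simp [Nat.testBit_lor, Nat.testBit_land, h2 _ _ _ h hx8, h3 _ _ _ h hy8, hi]
          · refine ⟨⟨x, hxn⟩, i, h, ?_⟩
            simp [Nat.testBit_lor, Nat.testBit_land, h1 _ _ _ h hx8, h4 _ _ _ h hy8, hi]
        · exact hF
    · cases hb : Nat.beq (P.dg x) y
      · obtain ⟨i, hi⟩ := (F.latin.1 ⟨x, hxn⟩).2 ⟨y, hyn⟩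
        simp only at hi
        have hne : i ≠ ⟨x, hxn⟩ := by
          rintro rfl
          have := F.diag ⟨x, hxn⟩
          rw [hi] at this
          exact Nat.ne_of_beq_eq_false hb this.symm
        rcases lt_or_gt_of_ne hne with h | h
        · refine ⟨i, ⟨x, hxn⟩, h, ?_⟩
          simp [Nat.testBit_lor, Nat.testBit_land, h2 _ _ _ h hx8, h4 _ _ _ h hy8, hi]
        · refine ⟨⟨x, hxn⟩, i, h, ?_⟩
          simp [Nat.testBit_lor, Nat.testBit_land, h1 _ _ _ h hx8, h3 _ _ _ h hy8, hi]
      · exact hF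
  · cases hb : Nat.ble (Nat.succ x) y
    · exact hF
    · have hlt : x < y := Nat.le_of_ble_eq_true hb
      refine ⟨⟨x, hxn⟩, ⟨y, hyn⟩, hlt, ?_⟩
      simp [Nat.testBit_land, h1 ⟨x, hxn⟩ ⟨y, hyn⟩ _ hlt hx8, h2 ⟨x, hxn⟩ ⟨y, hyn⟩ _ hlt hy8]

theorem Fits.nc (F : Fits P n A) (DM : BT) (full : ℕ) (I : Fin n → Fin n → ℕ)
    (hfull : ∀ i j, i < j → full.testBit (I i j) = true)
    (h1 : ∀ i j v, i < j → v < 8 → (DM.get v).testBit (I i j) = decide ((i : ℕ) = v))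
    (h2 : ∀ i j v, i < j → v < 8 → (DM.get (8 + v)).testBit (I i j) = decide ((j : ℕ) = v))
    (h3 : ∀ i j v, i < j → v < 8 →
      (DM.get (16 + v)).testBit (I i j) = decide ((A i j : ℕ) = v))
    (h4 : ∀ i j v, i < j → v < 8 →
      (DM.get (24 + v)).testBit (I i j) = decide ((A j i : ℕ) = v))
    (i j i' j' : Fin n) (h : i < j) (h' : i' < j') :
    (ncMask P DM full (I i j) (encF A i j)).testBit (I i' j') = true := by
  have h8 := F.h8
  obtain ⟨e1, e2, e3, e4⟩ := digs i j (A i j) (A j i) (by omega) (by omega) (by omega)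
  unfold ncMask
  simp only [force_eq]
  change encF A i j / 512 = _ at e1
  change Nat.mod (Nat.div (encF A i j) 64) 8 = _ at e2
  change Nat.mod (Nat.div (encF A i j) 8) 8 = _ at e3
  change Nat.mod (encF A i j) 8 = _ at e4
  have e1' : Nat.mod (Nat.div (encF A i j) 512) 8 = i := by
    change encF A i j / 512 % 8 = i
    rw [e1]; omega
  rw [e1', e2, e3, e4]
  change ((full ^^^ (full &&&
    ((DM.get i &&& DM.get (8 + j)) |||
    (((DM.get i &&& DM.get (16 + A i j)) ||| (DM.get (8 + i) &&& DM.get (24 + A i j))) |||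
    (((DM.get (8 + j) &&& DM.get (16 + A i j)) ||| (DM.get j &&& DM.get (24 + A i j))) |||
    (((DM.get j &&& DM.get (16 + A j i)) ||| (DM.get (8 + j) &&& DM.get (24 + A j i))) |||
    (((DM.get (8 + i) &&& DM.get (16 + A j i)) ||| (DM.get i &&& DM.get (24 + A j i))) |||
    (cond (P.ex (A i j) (A j i)) ((DM.get (16 + A i j) &&& DM.get (24 + A j i)) |||
      (DM.get (16 + A j i) &&& DM.get (24 + A i j))) 0 : ℕ)))))))) ||| 2 ^ I i j).testBit (I i' j')
      = true
  by_cases hI : i' = i ∧ j' = j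
  · obtain ⟨rfl, rfl⟩ := hI
    simp [Nat.testBit_lor]
  have k1 := fun v : Fin n => h1 i' j' v h' (by omega)
  have k2 := fun v : Fin n => h2 i' j' v h' (by omega)
  have k3 := fun v : Fin n => h3 i' j' v h' (by omega)
  have k4 := fun v : Fin n => h4 i' j' v h' (by omega)
  have hsw : ¬ (i' = j ∧ j' = i) := by rintro ⟨rfl, rfl⟩; exact absurd h (not_lt.2 h'.le)
  have hcond : (cond (P.ex (A i j) (A j i)) ((DM.get (16 + A i j) &&& DM.get (24 + A j i)) |||
      (DM.get (16 + A j i) &&& DM.get (24 + A i j))) 0 : ℕ).testBit (I i' j') = false := by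
    cases hx : P.ex (A i j) (A j i)
    · simp
    · simp only [cond_true, Nat.testBit_lor, Nat.testBit_land, k3, k4, Fin.val_inj]
      rw [Bool.or_eq_false_iff, ← Bool.decide_and, ← Bool.decide_and, decide_eq_false_iff_not,
        decide_eq_false_iff_not]
      refine ⟨fun ⟨a, b⟩ => hI (F.hex i j i' j' hx a b), fun ⟨a, b⟩ => ?_⟩
      have := F.hex i j j' i' hx b a
      exact hsw ⟨this.2, this.1⟩
  have g0 : ¬ (i' = i ∧ j' = j) := hI
  have g1 : ¬ (i' = i ∧ A i' j' = A i j) := by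
    rintro ⟨rfl, hh⟩; exact hI ⟨rfl, F.row hh⟩
  have g2 : ¬ (j' = i ∧ A j' i' = A i j) := by
    rintro ⟨rfl, hh⟩; exact hsw ⟨F.row hh, rfl⟩
  have g3 : ¬ (j' = j ∧ A i' j' = A i j) := by
    rintro ⟨rfl, hh⟩; exact hI ⟨F.col hh, rfl⟩
  have g4 : ¬ (i' = j ∧ A j' i' = A i j) := by
    rintro ⟨rfl, hh⟩; exact hsw ⟨rfl, F.col hh⟩
  have g5 : ¬ (i' = j ∧ A i' j' = A j i) := by
    rintro ⟨rfl, hh⟩; exact hsw ⟨rfl, F.row hh⟩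
  have g6 : ¬ (j' = j ∧ A j' i' = A j i) := by
    rintro ⟨rfl, hh⟩; exact hI ⟨F.row hh, rfl⟩
  have g7 : ¬ (j' = i ∧ A i' j' = A j i) := by
    rintro ⟨rfl, hh⟩; exact hsw ⟨F.col hh, rfl⟩
  have g8 : ¬ (i' = i ∧ A j' i' = A j i) := by
    rintro ⟨rfl, hh⟩; exact hI ⟨rfl, F.col hh⟩
  simp only [Nat.testBit_lor, Nat.testBit_land, Nat.testBit_xor, hcond, k1, k2, k3, k4,
    hfull i' j' h', Fin.val_inj, ← Bool.decide_and, g0, g1, g2, g3, g4, g5, g6, g7, g8]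
  simp

theorem runAux_sound (F : Fits P n A) (N fuel : ℕ) (hN : 64 ≤ N) (d root : ℕ) (h : List ℕ)
    (hr : runAux N fuel P d root h = true) : False := by
  have h8 := F.h8
  unfold runAux at hr
  obtain ⟨l, hl, -, hmem⟩ := loop2_spec (α := Bool) P.good (pairOK P.n) N []
  rw [hl] at hr
  simp only [force_eq, mkBT_eq, mkOT_eq] at hr
  set DM := treeBT (fun m => dmask (Nat.pow 8 (Nat.sub 3 (Nat.div m 8))) (Nat.mod m 8) l) 5 0
    with hDM
  set full := Nat.pred (Nat.pow 2 l.length) with hfl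
  set I : Fin n → Fin n → ℕ := fun i j => l.idxOf (encF A i j) with hI
  have hin : ∀ i j, i < j → encF A i j ∈ l := fun i j hij => by
    have hp : pairOK P.n (encF A i j / 64) = true := by
      have e : encF A i j / 64 = 8 * i + j := by
        simp only [encF, enc]
        have := (A i j).2
        have := (A j i).2
        omega
      have e1 : Nat.div (8 * i + j) 8 = i := by change (8 * (i : ℕ) + j) / 8 = i; omega
      have e2 : Nat.mod (8 * i + j) 8 = j := by change (8 * (i : ℕ) + j) % 8 = j; omega
      rw [e, pairOK, e1, e2, F.hn, Nat.ble_eq_true_of_le (show Nat.succ i ≤ (j : ℕ) from hij),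
        Nat.ble_eq_true_of_le (show Nat.succ j ≤ n by omega)]
      rfl
    refine hmem _ ?_ hp (F.good hij)
    simp only [encF, enc]
    have := (A i j).2
    have := (A j i).2
    omega
  have hget : ∀ i j, i < j → l[I i j]? = some (encF A i j) := fun i j hij => by
    simp [hI, hin i j hij]
  have hlt : ∀ i j, i < j → I i j < l.length := fun i j hij => List.idxOf_lt_length_iff.2 (hin i j hij)
  have hfull : ∀ i j, i < j → full.testBit (I i j) = true := fun i j hij => by
    have : full = 2 ^ l.length - 1 := rfl
    rw [this, Nat.testBit_two_pow_sub_one]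
    simp [hlt i j hij]
  have hd : ∀ a v i j, a < 4 → v < 8 → i < j → (DM.get (8 * a + v)).testBit (I i j) =
      decide (encF A i j / 8 ^ (3 - a) % 8 = v) := by
    intro a v i j ha hv hij
    rw [hDM, get_treeBT _ _ _ _ (by omega) (by omega)]
    have e1 : Nat.div (8 * a + v) 8 = a := by change (8 * a + v) / 8 = a; omega
    have e2 : Nat.mod (8 * a + v) 8 = v := by change (8 * a + v) % 8 = v; omega
    simp only [e1, e2]
    exact testBit_dmask _ _ _ _ _ (hget i j hij)
  have h1 : ∀ i j v, i < j → v < 8 → (DM.get v).testBit (I i j) = decide ((i : ℕ) = v) := by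
    intro i j v hij hv
    obtain ⟨e1, e2, e3, e4⟩ := digs i j (A i j) (A j i) (by omega) (by omega) (by omega)
    have := hd 0 v i j (by omega) hv hij
    rw [Nat.mul_zero, Nat.zero_add] at this
    rw [this]
    have e5 : encF A i j / 8 ^ (3 - 0) % 8 = i := by
      change enc i j (A i j) (A j i) / 512 % 8 = i
      rw [e1]; omega
    rw [e5]
  have h2 : ∀ i j v, i < j → v < 8 → (DM.get (8 + v)).testBit (I i j) = decide ((j : ℕ) = v) := by
    intro i j v hij hv
    obtain ⟨e1, e2, e3, e4⟩ := digs i j (A i j) (A j i) (by omega) (by omega) (by omega)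
    have := hd 1 v i j (by omega) hv hij
    rw [Nat.mul_one] at this
    rw [this]
    have e5 : encF A i j / 8 ^ (3 - 1) % 8 = j := e2
    rw [e5]
  have h3 : ∀ i j v, i < j → v < 8 →
      (DM.get (16 + v)).testBit (I i j) = decide ((A i j : ℕ) = v) := by
    intro i j v hij hv
    obtain ⟨e1, e2, e3, e4⟩ := digs i j (A i j) (A j i) (by omega) (by omega) (by omega)
    have := hd 2 v i j (by omega) hv hij
    rw [show 8 * 2 + v = 16 + v from rfl] at this
    rw [this]
    have e5 : encF A i j / 8 ^ (3 - 2) % 8 = A i j := e3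
    rw [e5]
  have h4 : ∀ i j v, i < j → v < 8 →
      (DM.get (24 + v)).testBit (I i j) = decide ((A j i : ℕ) = v) := by
    intro i j v hij hv
    obtain ⟨e1, e2, e3, e4⟩ := digs i j (A i j) (A j i) (by omega) (by omega) (by omega)
    have := hd 3 v i j (by omega) hv hij
    rw [show 8 * 3 + v = 24 + v from rfl] at this
    rw [this]
    have e5 : encF A i j / 8 ^ (3 - 3) % 8 = A j i := by
      change enc i j (A i j) (A j i) / 1 % 8 = _
      rw [Nat.div_one]; exact e4
    rw [e5]
  set S : Set ℕ := {k | ∃ i j, i < j ∧ k = I i j} with hS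
  have H := go_sound (fun k => sh64 (ncMask P DM full k (getO l k))) d
    (treeBT (fun id => sh64 (itMask P DM full id)) 8 0) S
    (by
      rintro o ⟨i, j, hij, rfl⟩ o' ⟨i', j', hij', rfl⟩
      simp only [testBit_sh64]
      rw [getO_eq l _ _ (hget i j hij)]
      exact F.nc DM full I hfull h1 h2 h3 h4 i j i' j' hij hij')
    (by
      intro m
      obtain ⟨m', hm'⟩ := get_treeBT_ex
        (fun id => sh64 (itMask P DM full id)) 8 0 m
      rw [hm']
      obtain ⟨i, j, hij, hb⟩ := F.it DM full I hfull h1 h2 h3 h4 m'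
      exact ⟨I i j, ⟨i, j, hij, rfl⟩, by simp only [testBit_sh64]; exact hb⟩)
    fuel (sh64 full) _ h
    (by intro hnil; rw [hnil] at hr; cases hr)
    (by rintro o ⟨i, j, hij, rfl⟩; rw [testBit_sh64]; exact hfull i j hij)
  obtain ⟨m', hm'⟩ := get_treeBT_ex
        (fun id => sh64 (itMask P DM full id)) 8 0 root
  obtain ⟨i, j, hij, hb⟩ := F.it DM full I hfull h1 h2 h3 h4 m'
  have := H (I i j) ⟨i, j, hij, rfl⟩
  rw [hm'] at this
  change (sh64 full &&& sh64 (itMask P DM full m')).testBit (64 + I i j) = false at this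
  rw [Nat.testBit_land, testBit_sh64, testBit_sh64, hb, hfull i j hij] at this
  cases this

theorem chk_sound (F : Fits P n A) (d root : ℕ) (h : List ℕ) (hr : run P d root h = true) :
    False :=
  runAux_sound F 64 1000 le_rfl d root h hr

end

end RSO

namespace RSO

/-- The canonical multiplicity matrix: `E` on the first four symbols and `1` elsewhere. -/
def mvE (E : List Nat) (s t : Nat) : Nat :=
  cond (Nat.ble (Nat.succ s) 4) (cond (Nat.ble (Nat.succ t) 4)
    (E.getD (Nat.add (Nat.mul 4 s) t) 0) 1) 1

/-- How often each symbol occurs on the diagonal. -/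
def dcE (d : List Nat) (s : Nat) : Nat := cond (Nat.ble (Nat.succ s) 4) (d.getD s 0) 1

def mkProb (n : Nat) (E d dgl : List Nat) (al : Nat → Nat → Nat → Nat → Bool) : Prob where
  n := n
  dg := fun i => dgl.getD i 0
  forb := fun s t => cond (Nat.beq s t) (Nat.ble (mvE E s s) (dcE d s)) (Nat.beq (mvE E s t) 0)
  ex := fun s t => cond (Nat.beq s t) false (Nat.beq (mvE E s t) 1)
  need := fun s t => cond (Nat.beq s t) false (cond (Nat.beq (mvE E s t) 0) false true)
  allow := al

def al6 : Nat → Nat → Nat → Nat → Bool := fun _ _ _ _ => true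

/-- The filter saying that the symbol 2 is at the positions `(3,c)` and `(r,3)`. -/
def al7 (c r : Nat) (i j s t : Nat) : Bool :=
  cond (Nat.beq i 3)
    (cond (Nat.beq s 2) (Nat.beq j c) (cond (Nat.beq j c) false true) &&
     cond (Nat.beq t 2) (Nat.beq j r) (cond (Nat.beq j r) false true))
    (cond (Nat.beq j 3)
      (cond (Nat.beq t 2) (Nat.beq i c) (cond (Nat.beq i c) false true) &&
       cond (Nat.beq s 2) (Nat.beq i r) (cond (Nat.beq i r) false true)) true)

end RSO

namespace RSO

def h_6_0_0 : List Nat := [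
  17248618999366863932900832670002282450182884189997225508397941023769791213325971521176372963425373051642682105995348652388157541788550929798255899961953875110565759451337708804188100588373908333865793988594006340603200906964900735324366447995560679070346707441011563560229984475765570788455962408343645494818485220034790654778751159072686864794943740511492441793649001968540913472293208864547932525025676993993444219052900243150355550908282993282748426290689323876336350121356050009867863193668979966852551719255101365813848558749737014200455664664407617182686481250123327085055396041195507399163534375596016135733972,
  8270893994416459694416610283720224180949234205089744443543849941697542314392665878700756398547973848706024715023759372490858732938884497930613713684480667619354842848888335001514459760512677683485525489887428465553792967221205119314359555819289983956315584492293266948801333093648508753745331358266638918191633266232288143773403013319362603896690940609645806989668284313728972692388619664824457449250378880997242567227615330755734490408758308113328382449597589775601569020712655716553497844256520317214165981140915355937443870425465494074961772593154745166606550033897282187847359015903810222538726743000183864677538,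
  17423512773357305606039818107175787879044470166611267798630681463899728459729260179661814234232193362274583392857088719032758925876321101797266903564047406522534783812787919896825744981671924688532658920816059567210555140350391289550101961070700609965630864181182127730272181607464794162805011090735622449086457442830099253130683258486905214825439609828347117017768266850341153551332290125466780788786820636265506149211045077506352588234639579075147147563070433916259604607829884141399066497646137772194816964918836704376937904606234145300121284024379853348133067294174417444989794356260894337545223968559432030945794,
  11807496233685325363583254352896001114745361728086952299971998576895617481149946776910452204453608199694757650537860887254602784829532730191736360327062436250760468661333442436672555727722299789103851549896423237817302909243316425113647194063036267577585231119202600620464723359045161948379737257199302679267133371008562227551681720500121862666395041029224674486200867473203742326802565534811545242545972408293792014996289353307082091283679064948949522531356916298270149581390023783557693599321420643082028419861004608481728511386507415321200196623015994273043643087397517008427059315506450452299524668228552700003692,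
  633988648984290650021877147111273860071540410701120669197458419741995948550881234242747502886176082631345517484047984064797332948948176632888869319017152114668059989310129991679878282420567018722963865323656120224784313927331958575912641809907088300347258297908733195763391533007976530596784445020521480248382585547110953413505643039168589735185201514260362397638188871181380097416529612272198201958158146224632157550993645295203798525096033449614555111833942251364036432716943204574126094108891112524746199886814837655863176647791961372190581440124586388072352075420317056881375747277979205793533962563621365696677,
  1500158212,
  0]

theorem chk_6_0_0 : run (mkProb 6 [1, 1, 1, 1, 1, 1, 1, 1, 1, 1, 1, 1, 1, 1, 1, 1] [1, 1, 1, 1] [0, 1, 2, 3, 4, 5] al6) 8 1 h_6_0_0 = true := by decide +kernel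

def h_6_2_0 : List Nat := [
  25987855005500847982249919591593007247572112620214204877373702040156388920335864761003941925574127953293600184388144179270243105301382299319113085007736769138202352123986553187616269377371116254685109329348368572335267168301567143450219554181785374987768559462623444638558716572798649863288348683503078487534178557502002819737149364411753655344837086070504996058561608871084847096608313062172784231848288242292209617820138949291323897459139184449868147894597009074878050008734809358218327010604081737513540130552868463713610710578891042292578589521206950724020455870747680473497509132248171231316281634521367001075800,
  26929693178325501288842618888248522101667832575573678166488182336070633140536882539197037197639536991732313018819764990993321819212132861076133430324629583852182501132054357756804923436344748982521172178629376319670386009760190896839027021123572932591349946163657852703197230881875489721098848159943079970003040424708092325851356632252008355316937175759691848129509349606989610686997977061883550092674493771806549812064103232830059480650495299524884610587457223388210111124188914688815999950301871603484717704519632941467562060210732657918009889927199338566536963701527527300035346872851112117062452103815617856768667,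
  98859116918081526912349625592131039975365398747977881539794593260334438641649925568843684840888926410516808373685105346421386895451140308247653171088837811243392295387233349849749191799744719304818463555348965949322155992698151906274715385397942301665272563151279915483515671375707214542348637369943740642762899191302302143875101582393469250494602506652371,
  0]

theorem chk_6_2_0 : run (mkProb 6 [2, 1, 1, 0, 1, 1, 1, 1, 1, 1, 1, 1, 0, 1, 1, 2] [2, 1, 1, 0] [0, 0, 1, 2, 4, 5] al6) 8 193 h_6_2_0 = true := by decide +kernel

def h_6_3_0 : List Nat := [
  24966145560613376163559877811127947281452754938687494391825002221485333662356530619447336160654095494714123671652391716929508598070657045249344333905877612075892716293835463455752868953706614775202409233087438824215236416513083116285693544121817228345224928251536233753614486043817405762746236294001898498292930074618223251056958654111423079290735380948708672364582551199507410374582393557282851028539164998154122228233026848911232017267939304558410596681901912306011593611931934983574624970021383860212466738623852755909369326546677083278439526129013709401408387812898907652594444420517496792911461344119326353100996,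
  3273275378823808811548644395448660326377727331283563544816637171006302998738659765709294105864334579049734908551118463732484198207836679657124885449590028605313512259309226746311143864181229492647898954823766005820458866132068158721820580404560617143968397190982291628103648731769315787949400924699383697818435110814948257476779506114715763192872195062891929277544959231879981540248534389561103220274786868133211854431407589269347041028525666863900307064332608355278369108786297532917420930110654207488393740920768696788282957431151251,
  0]

theorem chk_6_3_0 : run (mkProb 6 [2, 1, 1, 0, 1, 1, 1, 1, 1, 1, 0, 2, 0, 1, 2, 1] [2, 1, 0, 1] [0, 0, 1, 3, 4, 5] al6) 8 193 h_6_3_0 = true := by decide +kernel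

def h_6_4_0 : List Nat := [
  683142527362576344530977473008593083553890944758500976363958477726606698973970941163461611333692038069822571999013995281015450368452654623612682684053796367459794814164559424813872234107349499405265016075523961788234106253973506294764056290897620251959002757415790052783763868645387671941439684115717456843200933218084715177500829107624009390882507309440633229402863175443439608970968180498091848527479484926882571680441635998096482275904561085338955697523902116764941062103179339465057169097574632652917565809650450862487147903712721639648111609842781698447201092323303416144376795268385315784092540870695020896608,
  17265354132822976037805609094082695423044258461177602670473300525908997984267469705909767034810863913987609001437187239585101256117089453392207564553145094437792770569932432501307937609553977085358875291248237731804093355875431053581015466357720161506895677102081308291742532199120477191015331059520306589605378352233334681042801359342089921171783621643723365705569705036974318387925096733612533252488280768099601852134369786059540105962990185184687445943718654927261063662208873546198022533191157028602327213941891406474598368579218091108135002706436972655304616478719250210249904162296540105815285109115247408649677,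
  2591946655185928066104609177923177599448502252366590226407822841413700736369181288822926918369336037226000455091656905886179962204127517159294085435750023256806616126980322052240294613675472156325066701982629248399435259557966681037018757196766971361606530247001267868550209756545844829857203575874585221263594121608,
  0]

theorem chk_6_4_0 : run (mkProb 6 [1, 2, 1, 0, 2, 1, 0, 1, 1, 0, 1, 2, 0, 1, 2, 1] [1, 1, 1, 1] [0, 1, 2, 3, 4, 5] al6) 8 37 h_6_4_0 = true := by decide +kernel

def h_6_4_1 : List Nat := [
  24473014010780397345961745429416866541411632587299907706891393804925739146560101992070463751825317811463624353323071285001236838467935203360418049185245489169576866563775884416507183658464379465026047009236603975015623395061262892213900811516364039523459730347379942262612648560473543844552115327405185391244029873582351479936839544740492904367619196463642907543117668744369433615655288606824146300686642054414773014926999300546370752165059273625208797313301726052796301930490485339187152544227726202432473687370940373232931063171985495514890998037629669786069921553450211272623364042286296940088848724744272650225116,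
  731667984514995079176332197024519887710000122627475557018345558773488730321784903892238421301722588295322266861675977602869856511977786875705276735187501897784272984426586392514102631730858697060495801857768315934906002207576981372712477508193190504086376511541725693819064674799581285120207121378837010427779686345392866186576271563731639671837334256174345268591633692734812921117899670705081159213800309936851852607974687246780437876628345591111530701665977033365050887829940260304279313080363930126145790377441344121474513416310266474893389492652648075394010284573820303473845126990280091206222715102650896286923,
  48026455011891019485854831130555978106604356434102288317811947726380959124402561245027445362824115233915908032688102617813234909672897587387486178861833495160246322621541726537143278880022116463308056581516632195277709716146181421416192326692329901581971756149916281548141634708786967267955822279548853775415565188693072973022035686262968479972929942052284526234065190456974582002078597216217828094122278672520150872488268892990255314281356499653982370610908399633166501224180198112385812661584881626328474120069941851662954911845895277311557264204749219628559373842250316237660656633523908141399229460,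
  0]

theorem chk_6_4_1 : run (mkProb 6 [2, 1, 1, 0, 1, 0, 2, 1, 1, 2, 0, 1, 0, 1, 1, 2] [2, 0, 0, 2] [0, 0, 3, 3, 4, 5] al6) 8 196 h_6_4_1 = true := by decide +kernel

def h_6_4_2 : List Nat := [
  13603236028996080482591227403754818542932203050472210113049866096801129510643767321153697663182382412907355687047134905073134824184622615218647284047011268379533740794426279204293022400085047671741982577040031839327403357032024889609735880353413568351694815237622222924979116314307859748408476380511371020118081905484725968995805379149728725480797427979693899663072472495597436717090806350404739110456243182731882675560301332653889179736170696180185386515953017478125553860330255938647244694045156629130336684792558273108287414000753231862565149458285710909657648113921263480036156848783144365650456127468096220152258,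
  12307412015700905616272285226442014641024890687946411293464038691035496408295830129631848588988410930003740877863702199977605046394610462311801460997340537798112419002641516036619,
  0]

theorem chk_6_4_2 : run (mkProb 6 [2, 1, 1, 0, 1, 2, 0, 1, 1, 0, 1, 2, 0, 1, 2, 1] [2, 0, 1, 1] [0, 0, 2, 3, 4, 5] al6) 8 196 h_6_4_2 = true := by decide +kernel

def h_6_4_3 : List Nat := [
  12172068108547294839330231915256180872346946948359867278905253421248178002562111306527280543645233239903266224171049098964636058267391016353693909387714733342045752871088136326099794179816097192136626749218203193183204722142864798533490992326390150946392899182317177763053332795394446827610689434923341987766920682075138915433400359335990934143708581739129795685825368777261782785143468615587170418753888410855425467891029693276665880326432428932620310555098385628310365881163326923175180830303868985128862561911361130132204073308511895052475205287437126459629958523021135928601282186347927884776596675463359734269404,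
  32148956458060841577747675077231182538255826402434429920983866288612730208951949690523791385629149053072936301699025037140999065833390855370029540906984509204413457047445434757836151450140273481322600801150042520728806005502208498915188517578749208105755572454873836572338261895391780761038664981261241392296488391536697068139885920631388686256183294955261170888036169682107197243624847024935010539366002074117569779453449402488419957553851019228796757188036935532351306485575774123692093827174959557927274,
  0]

theorem chk_6_4_3 : run (mkProb 6 [2, 1, 1, 0, 1, 2, 0, 1, 1, 0, 2, 1, 0, 1, 1, 2] [2, 0, 0, 2] [0, 0, 3, 3, 4, 5] al6) 8 196 h_6_4_3 = true := by decide +kernel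

def h_6_4_4 : List Nat := [
  1424950332849554859108317581789405871162820905955981687767190818507656329134582671498428653871403703515371016433877441352397370164053804613885284882823048902756397415146102421569265891553395693012731394820750775105728362199199064958453809464568960129768592811360466507499429830618310615468089111181357517265433752519483478068693921456209682837756296635366443444600437424124853098662188367784727307796977574788419534950630826383063908789553733626403832455959426690394551333050392278442042947720667721026607830278264079665211679220945223101474779666481330535443613544532077794852985408050317517434520349213834069983840,
  6592439619376775131696005146162527248892522119330905830829794001782648325659614912145190714737213350923715004337921376506784407442459891476719662196389070406212022977356944169484066526812393050624544359642123744293412812416681894798681559006776821286711465640951750598240874460536912934294997837500385861002900285584537511146714385540043514077913196070688985733693655391530422604240986616026186242271962758915431424571009953893712981873764876894469,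
  0]

theorem chk_6_4_4 : run (mkProb 6 [2, 1, 1, 0, 1, 2, 0, 1, 1, 0, 2, 1, 0, 1, 1, 2] [2, 2, 0, 0] [0, 0, 1, 1, 4, 5] al6) 8 193 h_6_4_4 = true := by decide +kernel

def h_6_4_5 : List Nat := [
  24370593155567480304430865849545280721622303996657084640477117919308711099299151176803954252998585021650123505984385514912336528308392228985495316413229168331607464048896492925307596257421500566149537861884517631528817300694682591957033074451662523735502315808308459773936078290951987940363447823743048270336105153506228879737752456820039229786016083643023027885665958265469660988796030000875866637189688360301411184188059879568170343729168847186011446392757588007719967942149495697346015952916816766500837297210903609362027171720508108039109197498349251596397565445139104305815089447571964026144757127398194690530573,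
  1675024077165932045578308228692496023840355812616994673246328050908586608097470443214726521099578473886394307357727840971381456891585157057044371199100304876545488839946993251473639257476741756158476085387887808576665366211123699214302225445101755404171110369119353737083724250542568522058806249052474227130616026873885187105675247694786489777318091546374781680742486200218309892023722893087600953230869881846616648242289098867511918792505664986085007683712734878044573612174684334826975090592882864206709342439854601406858611177872113661458292527823738546485943107128415965796043583982617155145290515664335689305100,
  2451225825420737902967068744906461672654430660978053556372217761002423560534888123728158550287509161779788610016378784361100818909917,
  0]

theorem chk_6_4_5 : run (mkProb 6 [3, 1, 0, 0, 1, 1, 1, 1, 0, 1, 1, 2, 0, 1, 2, 1] [1, 1, 1, 1] [0, 1, 2, 3, 4, 5] al6) 8 83 h_6_4_5 = true := by decide +kernel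

def h_6_4_6 : List Nat := [
  1455891785176218163880778900518756111276848828154243903670715697661015335951203937920286178767009999143927453570459214870148510538591589228355144888361065539756577729275144967969522055030863639691374888131972267227312439336421881857593130988122941706490003079956580419265947831381515503413595518520266373419592830218930378956963437555384543143865558209039377080937154107264516720388296317522841303650930906707607918109908233238758331749106099632764269205245652896655452430164580562229572488957503702708807980069499956531450399554738485640758976732608067163288068727907520003141390457482927124530967250853729205015458,
  191932381387078310278403555846681648611569446181232492421622825520192144597439189021195134767747007124220136036953754703503794182395998113871334069639570406328750094847280038751959938029053358296826467599654387869708270231882133228963256629856228427526182286550672072194329968428873256021039591853331820539536488052362195154458400330453446624556867574858973295329658814429522287471426980914676382699789552854360236202099295611936237464963173356015530579113350606454604393620920645290003068824673844410482335412463045,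
  0]

theorem chk_6_4_6 : run (mkProb 6 [3, 1, 0, 0, 1, 1, 1, 1, 0, 1, 2, 1, 0, 1, 1, 2] [1, 1, 2, 0] [0, 1, 2, 2, 4, 5] al6) 8 202 h_6_4_6 = true := by decide +kernel

def h_6_4_7 : List Nat := [
  26871027913171517744929522216588594092482749463358170532261220188739693593275294905011399427607597780788640281949244997508172495729910854859383432006006053968139746129938885156138647895566421071415496601804882321014678769751119798092895747446065038645934374236915438911225807217884018838241725318133586660674860295597280662930148379464702550711019128009361843222120110987001257923478674997804108345234795455718335575563474972829798677420443489415569985811184960760441934099996694896909946503636042190621178956988765615248251873013704249133534906391633280359511595248251253865394126157505708755104633832402642687870236,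
  214520164231604244965224670395255748632510575063198080545032851400442444178722094654807675943352195734063088319693150197495402746819392361808451595860152247938600160066017494409734046099609540413083631864078313199952494837753822484211940661317120592156332173711862271356305171132391123775902848467901925322336744547499584823006972627408095224191078760283569090233253395285341221975141781381029721251175993031294588828841106373897402418232143047776818511042833751776686542188890251678712090113544148510740443142210884439848627510414823723795,
  0]

theorem chk_6_4_7 : run (mkProb 6 [3, 1, 0, 0, 1, 1, 1, 1, 0, 1, 2, 1, 0, 1, 1, 2] [3, 1, 0, 0] [0, 0, 0, 1, 4, 5] al6) 8 193 h_6_4_7 = true := by decide +kernel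

def h_7_0_2 : List Nat := [
  8748790928217982385203359781142791679938670271394186065184988363668396587273444814840736475469447413032153719536019310530543991126497278754183815905253219941723493755661061244281849706800205146590460974497082376967054799014205955182488684099323494876813442458653047258593625663870763249418407265561882500714405211123950972569231154180584971970279827429706263723704794025442098585174025742801794575217626306625399726161167200828621292905477358702884185218509058393751258062106670652417295323710258966970749751111793366371395153226149519559488248148566110341874718031361734898300552194643643746567736007199737035462931,
  24545763063067312144010508358996685190197358054918328800729582639984286311764553318717577819173209538160099490844130212738395073955587535456250397538343091026124691965221128750877661203940187460841433905230866472925594029958995379060178467567017902814674500603932618656101650474393580198230602488005546812810884044236989475684710741515915381461538897512080113345665331667927255673857686208928000177365948720106315470305481164001496799359288544177150921757711610807109530250459461943855029835079928086984806867717082884460445986039006462851344123724843934046561064099981913757752963927294590019548095835794723750349429,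
  30055114050840328212323825692545385425026895316230170690557026916408313640106735440970215205026550937424191004387424425816233746207379478621605830454542760380135015584483850864915634678571470647752135818370244946304994796472742587095285034579824842084675507850520425876784221284581874948476175026525691966719000961772365839952025618167860907756561878652872869042093839910270455154918047305434440500234912333596089880635569848619065000278410323044534201287882043489735186725052504507588261025218054972927309625937781200281875239410075294638184509559362185411813927783088000850758959175355444201759246807914237832336925,
  9691313516756701906958618828029460783986469833895330016918155797223421199299277806473300448577448994512097923363026342290029182323183523681775078274605236720411511487594776975925062394009310562995957989913405275642830084198324391703443707017560568033307225060933401745382582726458193008728231617666431665075482631246006015496249940694054710904604874910772664098326775690176401286489054427714102639982012720862453324360510043104927641978985647120317522313017740123343280266941424669988361564190629842864588420269941191398840814330518499334399353848416539138682309891241881196403663278389295757149353079526155818561246,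
  25092788401783325307060602910250277742291256540071185726613797403629431768804542029020696801990674902162270764791538337959547210813042178233242437299226594220520324993604063533236738681280557064753508964508950007599756300347939168898069151719152310948474379754298495059456820505307042831769865249231487325647714552441055105689564787903113051768968447730277037893887815138367181779057073022207298592733336780520214943101303720736152350993323485161852409395687416528629338612377879481924479726966342350573593910072421415547467421852165912510470584258036078287343772519806201884020270016473739167883069408224735402816580,
  8598150957039617173489298739311391729461464474262072970476904412284701450742194481577791960385656161605219353134039511134740109567718317937012998414046044644435093549558794503903482172477060494028022205937289073925501922377322734284657902691441137789805609536048607263169091359102685729699503904028691703542839286022034582444384692898889796463848997922960871115864332630788082679609971958378612115073436051829742472358928640965636033078904081779858903270463875103919986970329978026944552566016208915896464454993733106194799372369809433212418860768100102922675028795896112889374700959423117591422507221403308865277582,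
  1345604692581842467568811843980335153525854796389266576811002733746824449793228521143630793727398306521225394892177446073132289033657326111801720095116311982112357286121520935324052414191093672518519668071086919722235250592873738212953904923214234707677970146112911085681149472571928883287620189015131411308528265426799170997669924819533005217666074648231973754554682346686673144412530440137684285652928537565079328609366723758241838742807575398930660549188829238314130467843967474095814791588806301535076577492577142682665162249080401768434604612414511433493713486642031338867048439453936092009351420057834536616422,
  30112153244202639218107347047023732737216741879378873143484660381686173730589545035597251727603073569140592500804545882831464507834870790904051304790251580691847003959410738224968628304979192085694656884308268954915631441668093641527307549760029113087571999789887443893184045896776267318439860603304777092403625992892468797933813806474533592127651646674660563469899333576930006320430138967314166580221174305684685572960756433076517352142911431414850998986884698458694555819243841627911389877086482658955397379916630585427139158641292316068351312493914766713956392423452729224814776529263728059853885657629442095533569,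
  3613750831823651737940801764354593883026338836258220274803076971630924954514245346663473429638035989151700594843837469467523215590232365089192948891476675118070701019995543754567857280562895846431744897781745257741599009044178093606282634305041130854908042106652635556137333409358487519786947246634950438348736883380134030402054167639465195252289287231369658527455034373072751274665086012130889994638758959666339863530941563287205862426503984346712912008685766689596439799648566126218871763697367689416830866574847351915831124037195664069146331548317063288366877447573579126356425605250753279046742895332057413913500,
  1394425214169481552489392630708701281154986347676518355486692463576263022300844874183361650696468778833656145553637094183827241286988152468786538238029583689061417529750985030544760359904021245672397383552352200048571511841115217381122495786361336057711380393278336513799094919666565555466553357200103594807354171131603551374122825012874105832740689767195667459635619668040099794809640054194566797599600341725761636339361581732156684999784752604676061377541752557469094963848726898675139485567470688852479018134299471870074686270525809157384121759496120286873841408442230042974908008370522140666459158876843571944476,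
  17837890170216991857909166430392316004633139335946037343520222631564217347709579172191446106354901737290695540930064769639752476236411005725449373353339163927640983278585667893436593690085661427163477372680802610261798204919999937455959243378850998387275666863098539096360952878937296111213508997275971644898644082333191473435336356796537977807888653937711661319369558072399873379779682653876064040871855798335163468306646487988227576288018077134417463345670555075237629447965196568957295751463177833826749789445609356453024869377966843486861535453395814427059749190613095908917836106153878216522104432959800299555595,
  174109348514932330010370174410942349748816741491702559677409515475891681947782356624454571474690197271638338668245846303058733784920105748810676410715328483129398954731499827915768789107758583211686338849188874582340094217293709323012427210049106034408124566188404714449396877482060849218723375770432685354310242953717809978661502674209407338426360869409123487598236840892268072746735759017466621828768952438421147464179947003696073402035798378053881929461978725430996427250013078876816490916708983991804511184305815966798453040793114350407969948248637696104137199640585562887284517930285489441553880829711308156420,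
  3631871946576243403423636825729164291673989780253200522245462193200337064869549343624314727273663360769727628332209039185895705761332226041973166161713900011838017129921327293020884608474010417275273786768591200256939007107333451502602483762384492310572018753741440690467829547605514141730344056223222238953171608195353975553848407447361156204141357559395136619903051279006025778276897300341332271784737603958316171511391550558759413532160929252452287080458580963681556246390633081152122002600030719293478021781577265111064862293083466570681529100300058250266062215313300582229533621164910876644897319561405973005450,
  24585921255893429359017800876913034892275462913668312140292458446401117716261759286767012780030538236472923768352183944374289268062690536599596163208394886510464347971028893793872216826633621478603508210005948557247267867783605866326799668178101594438529335897765434325934096559083524612538388906454403960233031209019582026932832252382280902798525310097007416460322303428200785213160164668671168732610769609712883655368374304026861407187184457474891504006631364501823522817319384176796279803816887268215169349768935047397647052623796238956667599155676138693990465209186708147354536614452885084645340002462689884750876,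
  21052267168157515579011201120782197756439314940484429036660994992146564846657017480360508067071058709494336445397286936200710653341335561407232262631820401153966453970800107067580677081537326534518463815345148399580241792900635291708712724764371037075938634736167802223994505798289912242258782960328953622852198805617093176023640562606340152062423716015940376029269715276299247517336338613222053663145801657855681660432052921458162102414279947628377958690947071611075559357054554487458650213261887860127795382146250816465479012621031961688140150824948133659153319150736415438225029811707178384126346456555725074100940,
  22728762319936710618446909694822020736317836064257379788045117647160441544842999804984525812985477160330094624878232231733354871609072125843206366830452304068451158123569263977174830423365560765811034719199596702144587650920120105909814232032774223110903871120702807136426348052855323357426110844200139582240071174061567950717106540956075129254232331860295899526267444404491628373189784836751645988006916466769191590960147863808000194902757420133321596135777224345706002953541391702274791539519714117297265914315777788602901182970269529926315519790768968591213046329307993896427608429959398525697940360474013719252509,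
  10857011518673502855988132983225803201199517598968104920053225714090763362514330657842520866635301905295330728745609108509659549005527072283534899877358198212867239048642503869088906366296106409839168923178365675431915912529701281630694348765167137120446463175423482376874962152978135596250880780216339003121955857986877551598075940142431435298996697024915877950854630669100993198909746678039285075650448365414427246218878244894656909614245503008979794396004873269348784989142500561935554731431879558778242932635276318000015613955076392099227321463236575279157520717220798466065226354454073378288829382096288884263877,
  1434290877248397398642168804076405731247642648616496941326346240109965741894517823143531836202785536168673876250373822475564491967369933153657684746851151043984333316707607611449508850638134589797076119017961531144887449124873497991169184599967384506053284427438874748020546755847276604244312298205672270854720418994345750249610065049240227966515162830390192374435746475988999129064014972037327287985175163070708246222573663585177506959359169875291630961012307861048024747227147901068737306322981380826748803926195369616836494048762303284908071258828000368787906999332618539819185263685220570148785772071727154384129,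
  3802314685704370570633067240073630151897853422691178777537206316797178705853822402618907631825265732924081605601116078071858224081544758807692741950968899202332136376576056984554051575839106644849759453000652297995302450911515341635001023903274367960914858314525365299158280740740938057956167894471226147178791567576019805890269372578060448547799369736146100670836527162455779568816645786898183625431636534555500674886265449700176767062199354742414265667435781688501981906360988631532068811165576301619650738043862993046059471186143156264931398876845541163598644783456126713888052033341791125134035297131729890511752,
  25096408044872218613571022946309213439636368681626569158938506969903310791790452508991941242669722781438091183847609859939217387521447113066749408048183658153798020736527647357923247279218423259698474962531901536079689908690787344913319726046626197949833686732999571738818558407920217884408435426987407611408843004744312930061420360949820015949576880947774623154058588682016077181691106181563486537650588391437925577390747897508707738360280869251397668870429795863312295496644985852008120679720568178726429234656028746724680656587018517481674123309206631893708003429919852581870206490738038347186792312648586488061470,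
  3631989748404763929649412467311346177573403537469056918292432423701614500406499231603816590054293238399238439579845019280363385279010659886442315259665289961339382467146743067990173710196182704919517675157902372024551971969797862997117001159526693252257341309939964280639719029632049539549821681519905739243037229994012088093318514863245192589318931177111893917256419678770165510782209079850425415576409129479864424732886196676660703323467156712407982366748278923261654226532453245069489853510620964124581219626407781821843612164574593908493620729026826961287767382531975647204272831725255236950489425805371790680225,
  1466499966060665068453289463316503770571551374665153399065620428394248087476985003636946042250205175825167243403143418426276001828599845431427735565212181509863730230618412592720793464426218587545598525976506282267536011248360053220524644987901034158139293773063355245127184673621115054278963694536471548896270342476164003012911160631443504428078002844228402801258751227995446071966756867736235635406576652082966497698627411194071041732631751886169366323835392949278031880160364155461458706087505631094060795145344161167590986873513113646294033046369623940609275895697893385439125691985568025538489414060850064507330,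
  8652664721782544997392228425588968816981279834408411434518663223540954622479187400902877001431789813618102598913261755714921209925866665650089987750203361770211517766513416796121380202228397088144832084210882796785078682310315726007841149645315250638099798188885064056273990772605632145359743791224794388420454495576200510846671019845968479586433110048375649140016557798481500927381244303954534647694627546042813816131490419237243983168389789992792015726679663455748104150670742092098119119833157325761632348923010351766608032755937050634973343439958046848910849556659783697643839727360249051659817420420699266943816,
  13176182343748986537229036690139899817904094610688269910044127729097736201787922700549198611899384531946779541638450011075024667497265078093841072984939417683799617732705031327200368706769390834024698105630610991259417031947945221288849916821226806434990119650069891222748967793511518937136250246138173835702481479806288949607983526975596873040156680267447965185031258566693087232987506916702686681629321457657308161650446566602625164959314500528040558034173311228257544402533538608712652767056597378564010998641432741942950483423384311589984265009568103475629920394647371774750698481803817864756731292909793788515398,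
  1424148247122958561080695744567151544774941262473072049022734976302236971041857701152117439982324506247118558253777783758186672683762418785436345485943453593720290479375147815214878816185524998104677259420208829154209787533449920326786974683264954423500970441639367111448210780480217294520176641134977372921535252584693014304963426064038268667928587678682416003121250536671316683991205849439677593219715443247420445982937838696919530018464690214224765595589367528046384479657674324140946365033756671607795879662496017351892426253705098342349842841401591931693473188040693694001873495005221199925671300463335750920373,
  19865948300797460082708611041703047114373091368671622255101186638587705257418046138928979158951658200464155992794442798061012155028831505427770355719003242794488459305016062821977710646963710556166823221555632396386729785864552630014011240423511750252189577227873953083930272437390021198711866263131508324864798267452448787888426302600094278715264344583739040394895471488478118915946885343851169116683194041336536696195313608057632365890493403464234330739708706730549851293325902659752654045586737695157318220031803097955176603047444878993356250350834861177336690497925099811171776459336054227949865066849451421207307,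
  1304786255323420148071321669314805878050609909312701670284183729256525068106253795666630096785487928917570570399118302695370792134,
  0]

theorem chk_7_0_2 : run (mkProb 7 [2, 1, 1, 0, 1, 1, 1, 1, 1, 1, 0, 2, 0, 1, 2, 1] [2, 1, 0, 1] [0, 1, 0, 3, 4, 5, 6] (al7 0 2)) 9 3 h_7_0_2 = true := by decide +kernel

def h_7_0_1 : List Nat := [
  17687629931461034167642532020974535124061903805101403858603044910521029455887950269767755773480993790154220526843925629192583158196415866431790435223558512303446206129360929664997135877836393364240624639827517779710380715178546139834789703024140297982236668648676366181382909632010721830571917445535367590232481185917068219568867459391094163504841004186613988027883654581229358213719484047057320889003285116229425318165693881543757396060663604595668909375582533865401323793412669243279092183280746718467107477194630947680288266435068948499117679390102352243835795428845635709524176109077309260179134973756794680412171,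
  8653083389941900680935852776403993417113325788464567713315214061182290971610923631517982033887701459964853869711827953978773448347610967670336679056276693089959694523478971440756668325091480680538278389185547135062574924279139160535595929576251484841927932413972501073676643141775259485584809519737564072691943116300395399771819501747378390326621733183897047348734849073944454527550435749097581278725983369186986919160292692704074377467332288898077245259570126577141880909264067037545731069504220249209388388117231210218973108708731500992384899821702010016512305248632007440240373432692615229278541488359299192120772,
  207658323200637529003123726459848920015131192664689536439597168057505625017802832294108097747314520749311619740354646027611273603544901855849896216913312580971270336880278797931625984847041998173953955321215770873344578101947442819970526555548772067590335442190106603471993865987853863812555792018224857545707300973239027395411223069308619271947180770262216450042060190624237852156577794771174066315644069625843116539805826698450007543211430322611851163987138135738344454543424641790143429765839316644087218837349776953159989578246830250692922130257447146397208123975613092895424258538692078969790779814303449802412,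
  1375802874812308444415539772198306860255422494320234391452069661651049109773023223361045433816605968730455588191082266317696243875464913372793085510426016043322634412452444761381505704481577395693475020010853919649350818136992433471179208954061460787840902285770515744250514261911284178731147672641813114040673693769548089192151825356725228672578804885001573859625085322868185163485874566690296703507531745996035260403085414587122207495700882772535131270758925649830448698050929840214227503573288669228239556571649210045234079633033546512607854989774418928945284062722679445852089558621788087010317659749952310824355,
  16695521145588644660720484148877962684618164447069814112958401567895471885915004442499710297184132571854384164767415815461892060066744612023966722883644709468508911031903352588214761747873054833841174667341346700776443419484530585954270489272859780594191387646754415134663640719433812608938347137316763552965597894430371552212751656489844393115606090899067980879149500979833392486316600344944196545886311119141404580854231539889238581208831123336298234670885063898109759644679301205550691358103057853912192757841481123031572255547231106744088224158093518509038261984783092523114523453614362728480109450797041616612877,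
  2795984683122428135165084223653496711755104894135843796368278768071416999959494426169362576108863024597675460000635149355811695133199821919887161444281809055734102610241995490570141698109348598847100052604160456556085552353275688077606037742702604010450861903245571016096826613408691744810493820596429253809585561232107562432244671803412172617723150370604303437420141363315231134022741309266855333083008435281281360757567499997171766833991671132964992558282879027894400009784023143520605683759368079392101595418704047589323900546135527681544976666494042492543708102672660797638947343757634356000201755830131376899782,
  14740550320700918893274745957256354292363317047171399984300820008756290948305795252980819987666063923605225675372682742236744581538536796015415292923272403068695068968562097200471159403326764623394500305485228488184063191442511174156699384198977312135335835422847201396559201509303530868679042225744437045778222224287492857399469999298203367403957826653521463156664136385326001085043243294496589938701415564072968360927258333400029297142216282380201980812511349787909972458220857640358162074342989098920317397256219337964761872856570143621338882523606489631357443423590180005730177730573362198272089600406207795956370,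
  19788980378099894236790110627805184336502137913877669609940648859754723136956971735245681713767459198104354679848297107126731798912122868321046763411972480194484000112923106754549716052444946705270993107031292491154829804327838263000564751310110404482322735360862364926634401279421027686495270440142718669455246064863671371673687112700542377913168408200548433995353845081512922371312225481484706232095002646218836959267492690702922500209127242898679116310773760655080845904522302345352173969788218049026171366340128434845410561004199414252811840256083828535973675905668090085511373936701147566745424217405603386540318,
  16700837044708508003586547511426742332651542586875823531086092493663397570859357381857304979669788570233166826070773725712207997748830158224061084686808462790953960651840373016763973341491184662162412420993375365238231227138773725548041691770712972174374728639556425631120874664554268038183939899875163146904970139507771662845425351360709461502393255111469805335231330160458192145417032973277981597450330413064005251836231269366320284426485668299698039107091577222835747412086404341184540308596474594444497393639772924236392256386044139860640214289385388790743201566955070338195823347641578923319530443234283606431261,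
  24884080129126040427813499269306849163773366024021739068953060125309990725418806714222313380008083337434874558933522745988767253848870404167473351709258156116507104480084410169755294113999177547724118365608601438659592545554701372287072113266586103621989442849676781686113885287907737370053055068676529200549724525842040932510579974383439435990610313918026021061952593171874317880586537418772789628640567486221816224567597624543204875613056066625806676265836284665195789477265850848010200198920243563228900638091488377395600887115013879943609511382841877860742171039161226197936331743478766956848681436489108648693022,
  4756014384784781036041498649449719503656479267454150524670669709488583712367178461333159038257458300775708432561275635559146348663051539113425222971546815647838262754825739648841866535811939138545507827728588819391728079461206199893587824292557289810233230217679472082576107271335732606901745518405881386220282180812284600886722282062432740776112783152522619364086301632885448047437076634172568534413030484212166036361549683691978659527055107703072615850264390900427599511108281261832785840865203298273670396625236309043348698370002121761980531183118873649242144038392915919927844971059800417505194770049265192803782,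
  25092875857469668001328353430193309563360315386005266609420321886998967614071137190464522849634962610022714584220298994065134879392807405860942227755761425660509219611169201483802907904025145281319138435993715827527528665838755813504139084615876885675439755698531138280313483787033978629258972529409866016364970521059700545111489636576836350763216670166003672766053801102611027785071135373458296232685822361597024289199692584670616393474383740689131159836988756549426722041944564903966648093835652724083634488370840970454242390213420111361251995710826877421550479899552494005194708641759983137216704952165747605560833,
  645563453331152926896893873341610935622239965268999732305099551202962155257566325512862283544077430279395045619896485293359607804416297086885456431504492928711933936438142853926563614897051960235331474150539208366814941389103011844079146192993509785887451774412115055464987621474391943183140092683409426493289919301695671397378287034048204889171408203909061170359059481729740136954064504755440188803965506265465316099544844917507146934086984714287362665768405712842246605691498361160841969429196232233935571470767382945906510076843433031853272216222553455368114868429554978251867653987787962018177232782826387904600,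
  21717946777415994504427283079340406173847144597332702080060894377091772399652853202952018023182835233796377252435023756850403786628350398714320559744298806138105153344860847882145526411482993587091712972928007167635767089468592074479481333443057115909240768576057516835415163995246469557503119059415846153234581719955770897968051368904318053209446330753836590103616460071653514377991554924483630199966695913561996410257020417425156716681290912615919365929417872785822845282168027184852367595645608508285734807587565843598945314663030624054161212383460924893915977948246276366443033426588095499952898663719428223948902,
  3748080158861438164394198084161801961099915040652141030998282034224840359814706408420488019024066370617030827990930049027067765317102881746763440261191796937468056844795719257684319121604316945089507573666666118455715499737348061353654519089422543622399009437315561560502850237726450540085419000750791387649945026841561796114348135812386264248093055464857209477212457656239170829488079445332703310936523534057480905483960644929330845086163671604202927225891492506932861536836743344383707908782378898965107168883537327898505685900277879888972913807535985481485122692143662717927534232621432719972236110324491104964945,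
  21385862423743163188160799605036782824933093310287846723763878343761887813195525328178325410906393793046741372267109685952084413127089532136207041954587243908878413944100881582811041952343572662711278855136634970287640199876283851628739310503499152135413290999939677623934486873457938441345671132810194206041253494072603122473786659796848583000339151725763572751040447163410486663956334745305573209147660982889252983076403365148377070150277261024779118787692455112563555238363751180235182726983866998614304671909048948476812136071282428428586585267686402010696573057719025910681856953686939919335240607315151774642268,
  24497509965030307297498842427496695338644220922379091195365517102694156113259991125398000130604368326066125274056411274538946533326538970890967723083021569912823988473885444927584365521687676647733266865321531686329245074727162257586522332021032276282991098526319834631996603714273149223798088618904896310565540405264310014281296845314394986272209892918177238970286441941998995587411176583501057157408459703520265061144675809648956039439559944243230843728452207881732239518235440451382633825478624439256733158945760622380250311387402714594873088767665254039426854712937918633596671870048383248533068776756014113202437,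
  24822513260060579713704136529853318307069183497564733160113448288106462400881468556343058326117095930429755094115539031033911819240989437737949401490172096927279157419427039549161542650951018311451661647072027657470405072985269772118173629425640004670921661984613366630240114162039340132689983065728721528321161322647038678711622611069640431433797577461720245623596055973608019272519709868708902533479422730465655259413637563421382112417489058710133201697794701970152102153111708889288262282735035596504727137339317200927797366959022830125590029355107510251298447589698037133466593358447092686003243065435201131420866,
  210561404727335178903967159009417454020131892357297468625364384587324086284820404615749398608710558461583354440808300233449582932205228595007080848737857006173304969130745507054248642455019632579687020641338672809091952406495189738716051261419124966754472495845074867765884826510719734591381959975512756650142840354467399086834743123341148896569429103027078258675517515177150428060561680390371180820181555897751780977461490956574598718113899943794266155751015298902202064030159363696348473280425168906185791754256419138373505664372205544824419877214851631688208908632139275233120630607537071742238,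
  0]

theorem chk_7_0_1 : run (mkProb 7 [2, 1, 1, 0, 1, 1, 1, 1, 1, 1, 0, 2, 0, 1, 2, 1] [2, 1, 0, 1] [0, 1, 0, 3, 4, 5, 6] (al7 0 1)) 9 3 h_7_0_1 = true := by decide +kernel

def h_7_1_4 : List Nat := [
  22493475710600190926910979385348006963661653233426529499765575592084177809350483212191442084735470022332877457356611920992080664613022065236422185474826905739431503095805153113845655828856635600637573269673769261647909214749225948595008282773086286179578079121319507977587551985221479284467735598916474094176235138494531707759906560085948633472600192922691431673852678426624059543039021057521082724123731946095671669672864941483811133195101518485017838808554794446695235182647987057877311874781260244472293438528005505732560232901856167831030616402838946780370414334318056936813002550150498049397685836869511376033820,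
  20293674997685192878924070269153899330560351075186308763613764150993576080566017999629604055879440940030996171458460190327527426171984609043593046086293280168591144918565849722418622769812391222800825600629063717649528554260620459230206807550356454189100397826860169254983418320963365898094186031527718201511867813740259260574405246641383690533074477614456776166603033574970959579990748531161357506740067250250389116984282542167999910671888277586611734603791413719559046021947965740102313680745137845737343135235219225678263828548778443753456081587828147904895126667797723559207797635489769652941890595842258570691168,
  760398268576805037176848679881738919523455506025193001037214919124865058877890263767609537040943300066668719599847991969109735346831117601638446209794903359040075109479723367932107142357460665524458639648742450246504483045312242512460246105012501968947423036605902792771724910421542873687116535889063035808340636339083470077475028340479031397278205545656545811642821080093302859253800727977247137335948324014180836587001108725138431231224698063828402268108783456618517607304877693090092268719429656892792800760912395430441722292414896944925051794249833852566826139899133723961120272493645969566379190927923556042140,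
  9613230631561070623185633099560197531397556951981900206480337019039053477814135791878115754713530549809221280078988520941834305447317998148207761696717364886894512846478283095612188178235426838263668027893692650404115129645697368033119805554398490365909151684680139334827261825341869907724671786837764823822821227225144700643353686582591360703406551721469961664211572522396252420667264818556320916576744554429529373988240737990018821330038841475311468441668649932115403101881839641309720546328780029057500919915693295776403026989352094707524896429830877016315631278463472242479790716462200795281541855136287261242581,
  24603552844038109709358289178500283954588957568377781971404846553495578812249306574859908931223086655581852238497800480190800934987370631934961432202926080094641398690917670000337226034256712505259611799210908539311686364471218043096842838673989765336424541967841495101530508129059173895404062967266050413248238938276051616847152297808824475349183064435600836000933192785903529237639917994844061695069575740049295524580364182032628567837675842324817783246307052507733750405253506245543381805163691667627435868738810451611009032645769614192894039651407310234909215656482380117832913965936224925400160803249915647192180,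
  9158575483273920603266024390557865410789057794985779629208753652043809471461273920523410587103889128737778111972343770061427988748929640436966153813516124868055213329358246062721656192794459199841641281686886478753880139218572812613131677766681897689084461548535104347772881441002605448672299776381370305686295108475974420422460445226455274205036668430254879834881453439025757641047391545107496450058355468145855291222569167808929077311786235707666027800275611894750543433048382537282548525585450501988557072230699715098184845105945733216206879775035999123280970250829560052634219462301963974581399745892545544504416,
  492035837748213001863678810232159161762432206796560399317556118948341760060002664848949697791449495609318947289284683431869297969646167433402996339590423188132001515808124190380001288304615126323138798469323561550739428794820665852971336327983264254410927900251547305177297497884175445505705260855325356666495881102098518566048354146986130721230532817790253003229871346161703730136138337751484038126827176678449164100213753355261078108056547568389767427111506354743738010277030276431661940412221178337901149797766796145993332835058898386426355734850449253197643292241501233634718445888251767059864895764810140206670,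
  12847901523181088262894733695118137007710997717830594348489771247184769248653807425723624406335646455070312323810826038188244901915352847669667525764568220171134258417299763893560676145468879343069632118187030439922308294241800716774484570307234605220845771369133163392140192763556535945220743682495071197620100732134147394341114367939761235296809088348661426846601307455779497542614503560317933033851820058784722904858272679767154280583817443397098858137717440924451365172852625381861425852299242424228752844789145698500904013779337786428559839216320786281356630143282262658625550558038541041376449148639226432376083,
  182466062227369647807325775286706710270729580259273574587888756832296550090880696209569643499931821197678667596749178716854172011097508622974516223650777430376797341833860892925777622349573741169509288003652334176167310963068292788448353429659484962967401397048403239653280834759865354387685990119947702506105559347996424819611738954752567371434677023667003849669510954035055821696838840415720719293467466316498075333856670343593053991533009811670100282187521572506459777126187896248241642966466258694623373021858588226127345557396377604619757076029385440892335961054703583706803010412727018347755212752724082991192,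
  25853520514668600917018331233770448362786891591701384437020049500746281667114598186257791216593274446267044817694521187014970347018258612738235477921993031432981595829466441322462089533682819131293626472338881547219127332904592835072849866689986989345831190976994756482417126233251952484848060634438019586940489016672474538441478701988934402859544010153005432675123137960755882874827857402240570837608644871069340297709755715920256702441353042604525027253242999985136253629876197671940188681957056366027107999419765835276204036497520577605641893303986366185244432702706655158648574766859153421400913578694286791166024,
  3675248099051959582127600002773411939401055347643525577290302810074244167329877145506349945035375480382249381416903870229748935715831914564096171298551764368826647278203001440130850888127386983392771708398804754550477789043759760661630353076514734377980743563398411780957183093455777947300346604516520214998611125644854771660781141843465774383264907899497752841022285524661755238212421082034343039168646701251724820267601390023214739525995146083750448318354911815745231888746133195185954529962450969875352618105050268473156757488234536508764340155320419994231400725346684998747104206669343656924758115760042434434314,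
  9727567276008737127118317136944371839852749991594796898826929587172367024871270594739196588325790810446272979846676767605073828763091112717362907566568245995902548707531846965747875597504742083610549123402879889389422730248045622915049704726731214931252748292068710361021796029538820895234200859314571933393196024776992660933322506468026944726536539618668777578345818491177622127641546813086795725902805463415177027236895865851133630082706919989224507919631009445868049941752724486495518793436848595381078233958943182312619189050034747583463578804595601277319077915797802629543741601722077012898020225277719651360204,
  17753874485767912807471732369450859736384335548653771508869124153347930688902435083056686301680683142980027416762748100240789642154848745825804767767282406127991777604661528824577590727179985517447389251637795617663098219719662639399072228887285218119250238545194655909649219100692903524961855502996418405586935009161698146026727092273471557550955914173165020353739163485312987463517860652011572940990040076420392136553205557266905413081241329800729641618831123105939196416790570512739307407335753258886665530915563801804249225204414941163118320193006375534473146456919337196142659703141331885055048815049621847084404,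
  894589581351474144829837414366078065968717196071316825100222653960551084947007502137787672882322827915723278992450720961119389870107584434327901939635315442696598332924105991016060827348587324931,
  0]

theorem chk_7_1_4 : run (mkProb 7 [2, 1, 1, 0, 1, 1, 1, 1, 1, 1, 0, 2, 0, 1, 2, 1] [2, 1, 0, 1] [0, 1, 0, 3, 4, 5, 6] (al7 1 4)) 9 11 h_7_1_4 = true := by decide +kernel

end RSO

/-! ## Multiplicities of symbol pairs -/

namespace RSO

open Finset

section
variable {n : ℕ} {A : Fin n → Fin n → Fin n}

/-- The number of cells `(i,j)` with symbol `s` such that `(j,i)` has symbol `t`. -/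
def mult (A : Fin n → Fin n → Fin n) (s t : Fin n) : ℕ :=
  (univ.filter fun q : Fin n × Fin n => A q.1 q.2 = s ∧ A q.2 q.1 = t).card

/-- The number of occurrences of `s` on the diagonal. -/
def dcnt (A : Fin n → Fin n → Fin n) (s : Fin n) : ℕ :=
  (univ.filter fun i : Fin n => A i i = s).card

theorem mult_symm (A : Fin n → Fin n → Fin n) (s t : Fin n) : mult A s t = mult A t s := by
  unfold mult
  refine Finset.card_bij (fun q _ => (q.2, q.1)) ?_ ?_ ?_
  · intro q hq; simp at hq ⊢; exact ⟨hq.2, hq.1⟩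
  · rintro ⟨a, b⟩ _ ⟨c, d⟩ _ h; simp at h ⊢; exact ⟨h.2, h.1⟩
  · rintro ⟨a, b⟩ h; simp at h; exact ⟨(b, a), by simp [h], rfl⟩

theorem mult_row (hA : IsLatinSquare A) (s : Fin n) : ∑ t, mult A s t = n := by
  have h1 : ∑ t, mult A s t = (univ.filter fun q : Fin n × Fin n => A q.1 q.2 = s).card := by
    rw [Finset.card_eq_sum_card_fiberwise (f := fun q : Fin n × Fin n => A q.2 q.1)
      (t := (univ : Finset (Fin n))) (fun _ _ => by simp)]
    refine Finset.sum_congr rfl fun t _ => ?_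
    rw [Finset.filter_filter]; rfl
  have h2 : (univ.filter fun q : Fin n × Fin n => A q.1 q.2 = s).card = (univ : Finset (Fin n)).card := by
    choose f hf using fun i => (hA.1 i).2 s
    refine (Finset.card_bij (fun i _ => (i, f i)) ?_ ?_ ?_).symm
    · intro i _; simp; exact hf i
    · intro i _ j _ h; simp at h; exact h.1
    · rintro ⟨i, j⟩ h
      simp at h
      exact ⟨i, by simp, by
        simp only [Prod.mk.injEq, true_and]
        exact (hA.1 i).1 ((hf i).trans h.symm)⟩
  rw [h1, h2]; simp

theorem mult_pos {s t : Fin n} : mult A s t ≠ 0 ↔ ∃ i j, A i j = s ∧ A j i = t := by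
  unfold mult
  rw [Finset.card_ne_zero]
  constructor
  · rintro ⟨q, hq⟩; simp at hq; exact ⟨q.1, q.2, hq⟩
  · rintro ⟨i, j, h⟩; exact ⟨(i, j), by simpa using h⟩

theorem orth_eq (A : Fin n → Fin n → Fin n) : orthCount A (fun i j => A j i) =
    (univ.filter fun p : Fin n × Fin n => mult A p.1 p.2 ≠ 0).card := by
  unfold orthCount
  congr 1
  ext ⟨s, t⟩
  simp only [Finset.mem_image, Finset.mem_univ, true_and, Finset.mem_filter, mult_pos,
    Prod.mk.injEq, Prod.exists]

/-- The number of symbol pairs that do not occur. -/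
def zc (A : Fin n → Fin n → Fin n) : ℕ :=
  (univ.filter fun p : Fin n × Fin n => mult A p.1 p.2 = 0).card

theorem orth_add_zc (A : Fin n → Fin n → Fin n) :
    orthCount A (fun i j => A j i) + zc A = n ^ 2 := by
  rw [orth_eq, zc, add_comm, Finset.card_filter_add_card_filter_not]
  simp [sq]

/-- The number of different partners of the symbol `s`. -/
def rc (A : Fin n → Fin n → Fin n) (s : Fin n) : ℕ :=
  (univ.filter fun t : Fin n => mult A s t ≠ 0).card

theorem orth_eq_sum (A : Fin n → Fin n → Fin n) : orthCount A (fun i j => A j i) = ∑ s, rc A s := by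
  rw [orth_eq, Finset.card_eq_sum_card_fiberwise (f := fun q : Fin n × Fin n => q.1)
      (t := (univ : Finset (Fin n))) (fun _ _ => by simp)]
  refine Finset.sum_congr rfl fun s _ => ?_
  rw [Finset.filter_filter, rc]
  refine Finset.card_bij (fun q _ => q.2) ?_ ?_ ?_
  · rintro ⟨a, b⟩ h; simp at h ⊢; rw [← h.2]; exact h.1
  · rintro ⟨a, b⟩ h ⟨c, d⟩ h' e; simp at h h' e ⊢; exact ⟨h.2.trans h'.2.symm, e⟩
  · intro t h; simp at h; exact ⟨(s, t), by simpa using h, rfl⟩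

theorem rc_pos (hA : IsLatinSquare A) (s : Fin n) : 1 ≤ rc A s := by
  unfold rc
  rw [Nat.one_le_iff_ne_zero, Finset.card_ne_zero]
  by_contra hne
  rw [Finset.not_nonempty_iff_eq_empty, Finset.filter_eq_empty_iff] at hne
  have h := mult_row hA s
  rw [Finset.sum_eq_zero (fun t ht => by simpa using hne ht)] at h
  have := s.2
  omega

theorem rc_two (hA : IsLatinSquare A) {s t : Fin n} (h0 : mult A s t ≠ 0) (h1 : mult A s t ≠ n) :
    2 ≤ rc A s := by
  by_contra hlt
  have h2 : rc A s = 1 := by have := rc_pos hA s; omega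
  obtain ⟨b, hb⟩ := Finset.card_eq_one.1 h2
  have hz : ∀ c, c ≠ b → mult A s c = 0 := by
    intro c hc
    by_contra hne
    have : c ∈ univ.filter fun t : Fin n => mult A s t ≠ 0 := by simp [hne]
    rw [hb] at this
    exact hc (by simpa using this)
  have htb : t = b := by by_contra hne; exact h0 (hz t hne)
  have h := mult_row hA s
  rw [Finset.sum_eq_single b (fun c _ hc => hz c hc) (by simp)] at h
  rw [htb] at h1
  exact h1 h

theorem n_le_orth (hA : IsLatinSquare A) : n ≤ orthCount A (fun i j => A j i) := by
  rw [orth_eq_sum]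
  calc n = ∑ _s : Fin n, 1 := by simp
    _ ≤ _ := Finset.sum_le_sum fun s _ => rc_pos hA s

theorem orth_ne_succ (hA : IsLatinSquare A) : orthCount A (fun i j => A j i) ≠ n + 1 := by
  intro h
  rw [orth_eq_sum] at h
  have h1 : ∃ a, 2 ≤ rc A a := by
    by_contra hne
    push Not at hne
    have : ∑ s, rc A s ≤ ∑ _s : Fin n, 1 := Finset.sum_le_sum fun s _ => by
      have := hne s; omega
    simp at this
    omega
  obtain ⟨a, ha⟩ := h1
  -- two different partners
  obtain ⟨b, hb, c, hc, hbc⟩ := Finset.one_lt_card.1 (show 1 < (univ.filter fun t : Fin n =>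
    mult A a t ≠ 0).card from ha)
  simp only [Finset.mem_filter, Finset.mem_univ, true_and] at hb hc
  have key : ∀ b c : Fin n, mult A a b ≠ 0 → mult A a c ≠ 0 → b ≠ c → b ≠ a → False := by
    intro b c hb hc hbc hba
    have hlt : mult A a b ≠ n := by
      intro e
      have h2 := mult_row hA a
      have h3 : mult A a b + mult A a c ≤ ∑ t, mult A a t := by
        rw [← Finset.sum_pair hbc]
        exact Finset.sum_le_sum_of_subset (by simp)
      omega
    have hrb : 2 ≤ rc A b := rc_two hA (t := a) (by rwa [mult_symm]) (by rwa [mult_symm])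
    have h4 : ∑ s, (rc A s - 1) + n = ∑ s, rc A s := by
      have : ∑ s, rc A s = ∑ s, ((rc A s - 1) + 1) :=
        Finset.sum_congr rfl fun s _ => by have := rc_pos hA s; omega
      rw [this, Finset.sum_add_distrib]; simp
    have h5 : (rc A a - 1) + (rc A b - 1) ≤ ∑ s, (rc A s - 1) := by
      rw [← Finset.sum_pair (f := fun s => rc A s - 1) hba.symm]
      exact Finset.sum_le_sum_of_subset (by simp)
    omega
  by_cases hba : b = a
  · exact key c b hc hb hbc.symm (by rintro rfl; exact hbc hba)
  · exact key b c hb hc hbc hba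

/-- A symbol with no missing partner has every partner exactly once. -/
theorem mult_eq_one (hA : IsLatinSquare A) {s : Fin n} (h : ∀ t, mult A s t ≠ 0) (t : Fin n) :
    mult A s t = 1 := by
  have h1 := mult_row hA s
  by_contra hne
  have h2 : ∑ _t : Fin n, 1 < ∑ t, mult A s t :=
    Finset.sum_lt_sum (fun t _ => Nat.one_le_iff_ne_zero.2 (h t))
      ⟨t, by simp, by have := h t; omega⟩
  simp at h2
  omega

theorem zc_ne_one (hA : IsLatinSquare A) : zc A ≠ 1 := by
  intro h
  obtain ⟨⟨a, b⟩, hab⟩ := Finset.card_eq_one.1 h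
  have hz : ∀ s t, mult A s t = 0 ↔ s = a ∧ t = b := by
    intro s t
    have : (s, t) ∈ (univ.filter fun p : Fin n × Fin n => mult A p.1 p.2 = 0) ↔
      (s, t) ∈ ({(a, b)} : Finset (Fin n × Fin n)) := by rw [hab]
    simpa using this
  have h0 : mult A a b = 0 := (hz a b).2 ⟨rfl, rfl⟩
  have hba : b = a := ((hz b a).1 (by rw [mult_symm]; exact h0)).1
  subst hba
  have h1 : ∀ c, mult A b c ≤ 1 := by
    intro c
    by_cases hc : c = b
    · subst hc; omega
    · rw [mult_symm, mult_eq_one hA (fun t ht => hc ((hz c t).1 ht).1)]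
  have h2 : ∑ t, mult A b t < ∑ _t : Fin n, 1 :=
    Finset.sum_lt_sum (fun t _ => h1 t) ⟨b, by simp, by omega⟩
  rw [mult_row hA] at h2
  simp at h2

theorem general (hA : IsLatinSquare A) (hn : 1 ≤ n) :
    n ≤ orthCount A (fun i j => A j i) ∧ orthCount A (fun i j => A j i) ≤ n ^ 2 ∧
    orthCount A (fun i j => A j i) ≠ n + 1 ∧ orthCount A (fun i j => A j i) ≠ n ^ 2 - 1 := by
  have h1 := orth_add_zc A
  have h2 := zc_ne_one hA
  have h3 : 1 ≤ n ^ 2 := Nat.one_le_pow _ _ hn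
  exact ⟨n_le_orth hA, by omega, orth_ne_succ hA, by omega⟩

/-! ### The diagonal -/

theorem mult_self (A : Fin n → Fin n → Fin n) (s : Fin n) : mult A s s = dcnt A s +
    2 * (univ.filter fun q : Fin n × Fin n => q.1 < q.2 ∧ A q.1 q.2 = s ∧ A q.2 q.1 = s).card := by
  have e : mult A s s =
      (univ.filter fun q : Fin n × Fin n => q.1 = q.2 ∧ A q.1 q.2 = s ∧ A q.2 q.1 = s).card +
      ((univ.filter fun q : Fin n × Fin n => q.1 < q.2 ∧ A q.1 q.2 = s ∧ A q.2 q.1 = s).card +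
      (univ.filter fun q : Fin n × Fin n => q.2 < q.1 ∧ A q.1 q.2 = s ∧ A q.2 q.1 = s).card) := by
    unfold mult
    rw [← Finset.card_union_of_disjoint, ← Finset.card_union_of_disjoint]
    · congr 1
      ext ⟨i, j⟩
      simp only [Finset.mem_filter, Finset.mem_univ, true_and, Finset.mem_union]
      have := lt_trichotomy i j
      tauto
    · rw [Finset.disjoint_left]
      rintro ⟨i, j⟩ h1 h2
      simp only [Finset.mem_filter, Finset.mem_univ, true_and, Finset.mem_union] at h1 h2
      rcases h2 with h2 | h2
      · exact absurd h1.1 (ne_of_lt h2.1)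
      · exact absurd h1.1 (ne_of_gt h2.1)
    · rw [Finset.disjoint_left]
      rintro ⟨i, j⟩ h1 h2
      simp only [Finset.mem_filter, Finset.mem_univ, true_and] at h1 h2
      exact absurd h1.1 (not_lt.2 h2.1.le)
  have e1 : (univ.filter fun q : Fin n × Fin n => q.1 = q.2 ∧ A q.1 q.2 = s ∧ A q.2 q.1 = s).card
      = dcnt A s := by
    unfold dcnt
    refine Finset.card_bij (fun q _ => q.1) ?_ ?_ ?_
    · rintro ⟨i, j⟩ h; simp at h ⊢; obtain ⟨rfl, h, -⟩ := h; exact h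
    · rintro ⟨i, j⟩ h ⟨i', j'⟩ h' e; simp at h h' e ⊢; exact ⟨e, by rw [← h.1, ← h'.1, e]⟩
    · intro i h; simp at h; exact ⟨(i, i), by simpa using h, rfl⟩
  have e2 : (univ.filter fun q : Fin n × Fin n => q.2 < q.1 ∧ A q.1 q.2 = s ∧ A q.2 q.1 = s).card
      = (univ.filter fun q : Fin n × Fin n => q.1 < q.2 ∧ A q.1 q.2 = s ∧ A q.2 q.1 = s).card := by
    refine Finset.card_bij (fun q _ => (q.2, q.1)) ?_ ?_ ?_
    · intro q hq; simp at hq ⊢; exact ⟨hq.1, hq.2.2, hq.2.1⟩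
    · rintro ⟨a, b⟩ _ ⟨c, d⟩ _ h; simp at h ⊢; exact ⟨h.2, h.1⟩
    · rintro ⟨a, b⟩ h; simp at h; exact ⟨(b, a), by simp [h], rfl⟩
  rw [e, e1, e2]; ring

theorem sum_dcnt (A : Fin n → Fin n → Fin n) : ∑ s, dcnt A s = n := by
  unfold dcnt
  rw [← Finset.card_eq_sum_card_fiberwise (f := fun i : Fin n => A i i) (s := univ)
    (t := (univ : Finset (Fin n))) (fun _ _ => by simp)]
  simp

/-! ### Relabelling -/

/-- Rename positions by `σ` and symbols by `τ`. -/
def renam (A : Fin n → Fin n → Fin n) (σ τ : Equiv.Perm (Fin n)) : Fin n → Fin n → Fin n :=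
  fun i j => τ.symm (A (σ i) (σ j))

theorem renam_latin (hA : IsLatinSquare A) (σ τ : Equiv.Perm (Fin n)) :
    IsLatinSquare (renam A σ τ) := by
  constructor
  · intro i
    exact (τ.symm.bijective.comp (hA.1 (σ i))).comp σ.bijective
  · intro j
    exact (τ.symm.bijective.comp (hA.2 (σ j))).comp σ.bijective

theorem renam_mult (A : Fin n → Fin n → Fin n) (σ τ : Equiv.Perm (Fin n)) (s t : Fin n) :
    mult (renam A σ τ) s t = mult A (τ s) (τ t) := by
  unfold mult renam
  refine Finset.card_bij (fun q _ => (σ q.1, σ q.2)) ?_ ?_ ?_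
  · intro q hq
    simp only [Finset.mem_filter, Finset.mem_univ, true_and, Equiv.symm_apply_eq] at hq ⊢
    exact hq
  · rintro ⟨a, b⟩ _ ⟨c, d⟩ _ h; simpa using h
  · rintro ⟨a, b⟩ h
    refine ⟨(σ.symm a, σ.symm b), ?_, by simp⟩
    simpa [Equiv.symm_apply_eq] using h

theorem renam_dcnt (A : Fin n → Fin n → Fin n) (σ τ : Equiv.Perm (Fin n)) (s : Fin n) :
    dcnt (renam A σ τ) s = dcnt A (τ s) := by
  unfold dcnt renam
  refine Finset.card_bij (fun q _ => σ q) ?_ ?_ ?_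
  · intro q hq
    simp only [Finset.mem_filter, Finset.mem_univ, true_and, Equiv.symm_apply_eq] at hq ⊢
    exact hq
  · intro a _ c _ h; simpa using h
  · intro a h
    refine ⟨σ.symm a, ?_, by simp⟩
    simpa [Equiv.symm_apply_eq] using h

theorem renam_zc (A : Fin n → Fin n → Fin n) (σ τ : Equiv.Perm (Fin n)) :
    zc (renam A σ τ) = zc A := by
  unfold zc
  simp only [renam_mult]
  refine Finset.card_bij (fun q _ => (τ q.1, τ q.2)) ?_ ?_ ?_
  · intro q hq; simpa using hq
  · rintro ⟨a, b⟩ _ ⟨c, d⟩ _ h; simpa using h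
  · rintro ⟨a, b⟩ h
    exact ⟨(τ.symm a, τ.symm b), by simpa using h, by simp⟩

end

/-- Two functions with the same fibre sizes differ by a permutation. -/
theorem exists_perm {α β : Type} [Fintype α] [DecidableEq α] [DecidableEq β] (f g : α → β)
    (h : ∀ b, (univ.filter fun x => f x = b).card = (univ.filter fun x => g x = b).card) :
    ∃ σ : Equiv.Perm α, ∀ x, f (σ x) = g x := by
  have e : ∀ b, {x // g x = b} ≃ {x // f x = b} := fun b =>
    Fintype.equivOfCardEq (by rw [Fintype.card_subtype, Fintype.card_subtype, h b])
  refine ⟨((Equiv.sigmaFiberEquiv g).symm.trans (Equiv.sigmaCongrRight e)).trans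
    (Equiv.sigmaFiberEquiv f), fun x => ?_⟩
  exact (e (g x) ⟨x, rfl⟩).2

end RSO

/-! ## Orders 6 and 7 -/

namespace RSO

open Finset

/-- The permutations of `0,1,2,3`. -/
def perms4 : List (List Nat) := [
  [0, 1, 2, 3], [0, 1, 3, 2], [0, 2, 1, 3], [0, 2, 3, 1], [0, 3, 1, 2], [0, 3, 2, 1],
  [1, 0, 2, 3], [1, 0, 3, 2], [1, 2, 0, 3], [1, 2, 3, 0], [1, 3, 0, 2], [1, 3, 2, 0],
  [2, 0, 1, 3], [2, 0, 3, 1], [2, 1, 0, 3], [2, 1, 3, 0], [2, 3, 0, 1], [2, 3, 1, 0],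
  [3, 0, 1, 2], [3, 0, 2, 1], [3, 1, 0, 2], [3, 1, 2, 0], [3, 2, 0, 1], [3, 2, 1, 0]]

/-- The possible multiplicity matrices and diagonals with `z` missing pairs. -/
def canonList : Nat → List (List Nat × List Nat)
  | 0 => [([1, 1, 1, 1, 1, 1, 1, 1, 1, 1, 1, 1, 1, 1, 1, 1], [1, 1, 1, 1])]
  | 2 => [([2, 1, 1, 0, 1, 1, 1, 1, 1, 1, 1, 1, 0, 1, 1, 2], [2, 1, 1, 0])]
  | 3 => [([2, 1, 1, 0, 1, 1, 1, 1, 1, 1, 0, 2, 0, 1, 2, 1], [2, 1, 0, 1])]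
  | 4 => [([1, 2, 1, 0, 2, 1, 0, 1, 1, 0, 1, 2, 0, 1, 2, 1], [1, 1, 1, 1]),
    ([2, 1, 1, 0, 1, 0, 2, 1, 1, 2, 0, 1, 0, 1, 1, 2], [2, 0, 0, 2]),
    ([2, 1, 1, 0, 1, 2, 0, 1, 1, 0, 1, 2, 0, 1, 2, 1], [2, 0, 1, 1]),
    ([2, 1, 1, 0, 1, 2, 0, 1, 1, 0, 2, 1, 0, 1, 1, 2], [2, 0, 0, 2]),
    ([2, 1, 1, 0, 1, 2, 0, 1, 1, 0, 2, 1, 0, 1, 1, 2], [2, 2, 0, 0]),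
    ([3, 1, 0, 0, 1, 1, 1, 1, 0, 1, 1, 2, 0, 1, 2, 1], [1, 1, 1, 1]),
    ([3, 1, 0, 0, 1, 1, 1, 1, 0, 1, 2, 1, 0, 1, 1, 2], [1, 1, 2, 0]),
    ([3, 1, 0, 0, 1, 1, 1, 1, 0, 1, 2, 1, 0, 1, 1, 2], [3, 1, 0, 0])]
  | _ => []

/-- The symmetric matrix with row sums 4 and given entries above the diagonal. -/
def mkM (a b c e f g : Nat) : List Nat :=
  [4 - a - b - c, a, b, c, a, 4 - a - e - f, e, f, b, e, 4 - b - e - g, g, c, f, g, 4 - c - f - g]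

def cnt0 (l : List Nat) : Nat := l.foldr (fun x k => if x = 0 then k + 1 else k) 0

def cls (a b c e f g d0 d1 d2 d3 : Nat) : Prop :=
  ∃ p ∈ perms4, ∃ x ∈ canonList (cnt0 (mkM a b c e f g)),
    (∀ i < 4, x.2.getD i 0 = [d0, d1, d2, d3].getD (p.getD i 0) 0) ∧
    ∀ i < 4, ∀ j < 4, x.1.getD (4 * i + j) 0 =
      (mkM a b c e f g).getD (4 * p.getD i 0 + p.getD j 0) 0

instance (a b c e f g d0 d1 d2 d3 : Nat) : Decidable (cls a b c e f g d0 d1 d2 d3) := by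
  unfold cls; infer_instance

def clsD (a b c e f g : Nat) : Bool :=
  (List.range 5).all fun d0 => cond (d0 ≤ 4 - a - b - c ∧ d0 % 2 = (4 - a - b - c) % 2)
  ((List.range 5).all fun d1 => cond (d1 ≤ 4 - a - e - f ∧ d1 % 2 = (4 - a - e - f) % 2)
  ((List.range 5).all fun d2 => cond (d2 ≤ 4 - b - e - g ∧ d2 % 2 = (4 - b - e - g) % 2)
  ((List.range 5).all fun d3 => cond (d3 ≤ 4 - c - f - g ∧ d3 % 2 = (4 - c - f - g) % 2)
  (cond (d0 + d1 + d2 + d3 = 4) (cls a b c e f g d0 d1 d2 d3) true) true) true) true) true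

def clsM : Bool :=
  (List.range 5).all fun a => (List.range 5).all fun b => cond (a + b ≤ 4)
  ((List.range 5).all fun c => cond (a + b + c ≤ 4)
  ((List.range 5).all fun e => cond (a + e ≤ 4 ∧ b + e ≤ 4)
  ((List.range 5).all fun f => cond (a + e + f ≤ 4 ∧ c + f ≤ 4)
  ((List.range 5).all fun g => cond (b + e + g ≤ 4 ∧ c + f + g ≤ 4)
  (cond (cnt0 (mkM a b c e f g) ≤ 4 ∧ cnt0 (mkM a b c e f g) ≠ 1) (clsD a b c e f g) true) true)
    true) true) true) true

theorem clsM_true : clsM = true := by decide +kernel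

theorem cond_true_imp {p b : Bool} (h : cond p b true = true) (hp : p = true) : b = true := by
  subst hp; exact h

theorem cls_all (a b c e f g d0 d1 d2 d3 : ℕ) (h0 : a + b + c ≤ 4) (h1 : a + e + f ≤ 4)
    (h2 : b + e + g ≤ 4) (h3 : c + f + g ≤ 4) (hz : cnt0 (mkM a b c e f g) ≤ 4)
    (hz1 : cnt0 (mkM a b c e f g) ≠ 1)
    (e0 : d0 ≤ 4 - a - b - c) (p0 : d0 % 2 = (4 - a - b - c) % 2)
    (e1 : d1 ≤ 4 - a - e - f) (p1 : d1 % 2 = (4 - a - e - f) % 2)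
    (e2 : d2 ≤ 4 - b - e - g) (p2 : d2 % 2 = (4 - b - e - g) % 2)
    (e3 : d3 ≤ 4 - c - f - g) (p3 : d3 % 2 = (4 - c - f - g) % 2)
    (hd : d0 + d1 + d2 + d3 = 4) : cls a b c e f g d0 d1 d2 d3 := by
  have h := clsM_true
  unfold clsM at h
  have r : ∀ {k : ℕ}, k ≤ 4 → k ∈ List.range 5 := fun hk => List.mem_range.2 (by omega)
  replace h := List.all_eq_true.1 h a (r (by omega))
  replace h := List.all_eq_true.1 h b (r (by omega))
  replace h := cond_true_imp h (decide_eq_true (by omega))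
  replace h := List.all_eq_true.1 h c (r (by omega))
  replace h := cond_true_imp h (decide_eq_true (by omega))
  replace h := List.all_eq_true.1 h e (r (by omega))
  replace h := cond_true_imp h (decide_eq_true (by omega))
  replace h := List.all_eq_true.1 h f (r (by omega))
  replace h := cond_true_imp h (decide_eq_true (by omega))
  replace h := List.all_eq_true.1 h g (r (by omega))
  replace h := cond_true_imp h (decide_eq_true (by omega))
  replace h := cond_true_imp h (decide_eq_true ⟨hz, hz1⟩)
  unfold clsD at h
  replace h := List.all_eq_true.1 h d0 (r (by omega))
  replace h := cond_true_imp h (decide_eq_true ⟨e0, p0⟩)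
  replace h := List.all_eq_true.1 h d1 (r (by omega))
  replace h := cond_true_imp h (decide_eq_true ⟨e1, p1⟩)
  replace h := List.all_eq_true.1 h d2 (r (by omega))
  replace h := cond_true_imp h (decide_eq_true ⟨e2, p2⟩)
  replace h := List.all_eq_true.1 h d3 (r (by omega))
  replace h := cond_true_imp h (decide_eq_true ⟨e3, p3⟩)
  replace h := cond_true_imp h (decide_eq_true hd)
  exact of_decide_eq_true h

end RSO

namespace RSO

open Finset

theorem mvE_lt (E : List Nat) {s t : Nat} (hs : s < 4) (ht : t < 4) :
    mvE E s t = E.getD (4 * s + t) 0 := by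
  unfold mvE
  rw [Nat.ble_eq_true_of_le (show Nat.succ s ≤ 4 from hs),
    Nat.ble_eq_true_of_le (show Nat.succ t ≤ 4 from ht)]
  rfl

theorem ble_false {a b : Nat} (h : b < a) : Nat.ble a b = false := by
  cases hb : Nat.ble a b
  · rfl
  · exact absurd (Nat.le_of_ble_eq_true hb) (by omega)

theorem mvE_ge (E : List Nat) {s t : Nat} (h : 4 ≤ s ∨ 4 ≤ t) : mvE E s t = 1 := by
  unfold mvE
  rcases h with h | h
  · rw [ble_false (show 4 < Nat.succ s by omega)]; rfl
  · rw [ble_false (show 4 < Nat.succ t by omega)]; cases Nat.ble (Nat.succ s) 4 <;> rfl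

theorem dcE_lt (d : List Nat) {s : Nat} (hs : s < 4) : dcE d s = d.getD s 0 := by
  unfold dcE
  rw [Nat.ble_eq_true_of_le (show Nat.succ s ≤ 4 from hs)]
  rfl

theorem dcE_ge (d : List Nat) {s : Nat} (hs : 4 ≤ s) : dcE d s = 1 := by
  unfold dcE
  rw [ble_false (show 4 < Nat.succ s by omega)]
  rfl

/-- Move the symbols with missing partners to the front. -/
theorem norm1 {m : ℕ} (A : Fin (4 + m) → Fin (4 + m) → Fin (4 + m)) (hA : IsLatinSquare A)
    (hz : zc A ≤ 4) : ∃ A' : Fin (4 + m) → Fin (4 + m) → Fin (4 + m), IsLatinSquare A' ∧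
      zc A' = zc A ∧ ∀ s t : Fin (4 + m), 4 ≤ (s : ℕ) → mult A' s t ≠ 0 := by
  classical
  let Z : Finset (Fin (4 + m)) :=
    (univ.filter fun p : Fin (4 + m) × Fin (4 + m) => mult A p.1 p.2 = 0).image Prod.fst
  have hZ : Z.card ≤ 4 := Finset.card_image_le.trans hz
  obtain ⟨T, hZT, hT⟩ := Finset.exists_superset_card_eq (s := Z) hZ (by simp)
  have hc : (univ.filter fun x : Fin (4 + m) => (x : ℕ) < 4).card = 4 := by
    have := Fin.card_filter_val_lt (n := 4 + m) (m := 4)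
    simp at this ⊢
    try exact this
  obtain ⟨τ, hτ⟩ := exists_perm (fun x : Fin (4 + m) => x ∈ T) (fun x => (x : ℕ) < 4) (by
    intro b
    by_cases hb : b
    · simp [hb, hc, hT]
    · have h1 := Finset.card_filter_add_card_filter_not (s := (univ : Finset (Fin (4 + m))))
        (fun x => x ∈ T)
      have h2 := Finset.card_filter_add_card_filter_not (s := (univ : Finset (Fin (4 + m))))
        (fun x : Fin (4 + m) => (x : ℕ) < 4)
      have h3 : (univ.filter fun x => x ∈ T).card = 4 := by simp [hT]
      simp only [hb, eq_iff_iff, iff_false]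
      omega)
  refine ⟨renam A (Equiv.refl _) τ, renam_latin hA _ _, renam_zc _ _ _, fun s t hs h0 => ?_⟩
  rw [renam_mult] at h0
  have h1 : τ s ∈ T := hZT (Finset.mem_image.2 ⟨(τ s, τ t), by simp [h0], rfl⟩)
  have h2 := hτ s
  simp only [h1, eq_iff_iff, true_iff] at h2
  omega

theorem perms4_ok : ∀ p ∈ perms4, (∀ i < 4, p.getD i 0 < 4) ∧
    ∀ i < 4, ∀ j < 4, p.getD i 0 = p.getD j 0 → i = j := by decide +kernel

theorem cnt0_cons (x : ℕ) (l : List ℕ) : cnt0 (x :: l) = (if x = 0 then 1 else 0) + cnt0 l := by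
  have e : cnt0 (x :: l) = if x = 0 then cnt0 l + 1 else cnt0 l := rfl
  rw [e]; split_ifs <;> omega

theorem getD16 (F : Fin 4 → Fin 4 → ℕ) (k l : Fin 4) : F k l =
    [F 0 0, F 0 1, F 0 2, F 0 3, F 1 0, F 1 1, F 1 2, F 1 3,
     F 2 0, F 2 1, F 2 2, F 2 3, F 3 0, F 3 1, F 3 2, F 3 3].getD (4 * k + l) 0 := by
  fin_cases k <;> fin_cases l <;> rfl

theorem getD4 (D : Fin 4 → ℕ) (k : Fin 4) : D k = [D 0, D 1, D 2, D 3].getD k 0 := by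
  fin_cases k <;> rfl

theorem mkM_eq (F : Fin 4 → Fin 4 → ℕ) (hs : ∀ i j, F i j = F j i)
    (hr : ∀ i, F i 0 + F i 1 + F i 2 + F i 3 = 4) :
    mkM (F 0 1) (F 0 2) (F 0 3) (F 1 2) (F 1 3) (F 2 3) =
    [F 0 0, F 0 1, F 0 2, F 0 3, F 1 0, F 1 1, F 1 2, F 1 3,
     F 2 0, F 2 1, F 2 2, F 2 3, F 3 0, F 3 1, F 3 2, F 3 3] := by
  have r0 := hr 0
  have r1 := hr 1
  have r2 := hr 2
  have r3 := hr 3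
  rw [hs 1 0] at r1 ⊢
  rw [hs 2 0, hs 2 1] at r2 ⊢
  rw [hs 3 0, hs 3 1, hs 3 2] at r3 ⊢
  generalize F 0 0 = a at *
  generalize F 0 1 = b at *
  generalize F 0 2 = c at *
  generalize F 0 3 = d at *
  generalize F 1 1 = e at *
  generalize F 1 2 = f at *
  generalize F 1 3 = g at *
  generalize F 2 2 = h at *
  generalize F 2 3 = i at *
  generalize F 3 3 = j at *
  have e0 : 4 - b - c - d = a := by omega
  have e1 : 4 - b - f - g = e := by omega
  have e2 : 4 - c - f - i = h := by omega
  have e3 : 4 - d - g - i = j := by omega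
  unfold mkM
  rw [e0, e1, e2, e3]

theorem core (F : Fin 4 → Fin 4 → ℕ) (D : Fin 4 → ℕ) (hs : ∀ i j, F i j = F j i)
    (hr : ∀ i, F i 0 + F i 1 + F i 2 + F i 3 = 4)
    (hd : ∀ i, D i ≤ F i i ∧ D i % 2 = F i i % 2) (hD : D 0 + D 1 + D 2 + D 3 = 4)
    (z : ℕ) (hz4 : z ≤ 4) (hz1 : z ≠ 1)
    (hz : ∑ i, ∑ j, (if F i j = 0 then 1 else 0) = z) :
    ∃ p ∈ perms4, ∃ x ∈ canonList z,
      (∀ i < 4, ∀ k : Fin 4, (k : ℕ) = p.getD i 0 → x.2.getD i 0 = D k) ∧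
      ∀ i < 4, ∀ j < 4, ∀ k l : Fin 4, (k : ℕ) = p.getD i 0 → (l : ℕ) = p.getD j 0 →
        x.1.getD (4 * i + j) 0 = F k l := by
  have r0 := hr 0
  have r1 := hr 1
  have r2 := hr 2
  have r3 := hr 3
  have d0 := hd 0
  have d1 := hd 1
  have d2 := hd 2
  have d3 := hd 3
  rw [hs 1 0] at r1
  rw [hs 2 0, hs 2 1] at r2
  rw [hs 3 0, hs 3 1, hs 3 2] at r3
  have e0 : 4 - F 0 1 - F 0 2 - F 0 3 = F 0 0 := by clear hz hz4 hz1 hD d0 d1 d2 d3; omega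
  have e1 : 4 - F 0 1 - F 1 2 - F 1 3 = F 1 1 := by clear hz hz4 hz1 hD d0 d1 d2 d3; omega
  have e2 : 4 - F 0 2 - F 1 2 - F 2 3 = F 2 2 := by clear hz hz4 hz1 hD d0 d1 d2 d3; omega
  have e3 : 4 - F 0 3 - F 1 3 - F 2 3 = F 3 3 := by clear hz hz4 hz1 hD d0 d1 d2 d3; omega
  have f0 : F 0 1 + F 0 2 + F 0 3 ≤ 4 := by clear hz hz4 hz1 hD d0 d1 d2 d3; omega
  have f1 : F 0 1 + F 1 2 + F 1 3 ≤ 4 := by clear hz hz4 hz1 hD d0 d1 d2 d3; omega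
  have f2 : F 0 2 + F 1 2 + F 2 3 ≤ 4 := by clear hz hz4 hz1 hD d0 d1 d2 d3; omega
  have f3 : F 0 3 + F 1 3 + F 2 3 ≤ 4 := by clear hz hz4 hz1 hD d0 d1 d2 d3; omega
  have hL := mkM_eq F hs hr
  have hcz : cnt0 (mkM (F 0 1) (F 0 2) (F 0 3) (F 1 2) (F 1 3) (F 2 3)) = z := by
    rw [hL, ← hz]
    simp only [Fin.sum_univ_four, cnt0_cons]
    have : cnt0 [] = 0 := rfl
    rw [this]
    ring
  have h : cls (F 0 1) (F 0 2) (F 0 3) (F 1 2) (F 1 3) (F 2 3) (D 0) (D 1) (D 2) (D 3) := by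
    have g0 : D 0 ≤ 4 - F 0 1 - F 0 2 - F 0 3 := by rw [e0]; exact d0.1
    have g0' : D 0 % 2 = (4 - F 0 1 - F 0 2 - F 0 3) % 2 := by rw [e0]; exact d0.2
    have g1 : D 1 ≤ 4 - F 0 1 - F 1 2 - F 1 3 := by rw [e1]; exact d1.1
    have g1' : D 1 % 2 = (4 - F 0 1 - F 1 2 - F 1 3) % 2 := by rw [e1]; exact d1.2
    have g2 : D 2 ≤ 4 - F 0 2 - F 1 2 - F 2 3 := by rw [e2]; exact d2.1
    have g2' : D 2 % 2 = (4 - F 0 2 - F 1 2 - F 2 3) % 2 := by rw [e2]; exact d2.2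
    have g3 : D 3 ≤ 4 - F 0 3 - F 1 3 - F 2 3 := by rw [e3]; exact d3.1
    have g3' : D 3 % 2 = (4 - F 0 3 - F 1 3 - F 2 3) % 2 := by rw [e3]; exact d3.2
    have g4 : cnt0 (mkM (F 0 1) (F 0 2) (F 0 3) (F 1 2) (F 1 3) (F 2 3)) ≤ 4 := hcz.symm ▸ hz4
    have g5 : cnt0 (mkM (F 0 1) (F 0 2) (F 0 3) (F 1 2) (F 1 3) (F 2 3)) ≠ 1 := hcz.symm ▸ hz1
    exact cls_all _ _ _ _ _ _ _ _ _ _ f0 f1 f2 f3 g4 g5 g0 g0' g1 g1' g2 g2' g3 g3' hD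
  obtain ⟨p, hp, x, hx, hxd, hxE⟩ := h
  rw [hcz] at hx
  rw [hL] at hxE
  refine ⟨p, hp, x, hx, fun i hi k hk => ?_, fun i hi j hj k l hk hl => ?_⟩
  · rw [hxd i hi, getD4 D k, hk]
  · rw [hxE i hi j hj, getD16 F k l, hk, hl]

theorem norm2 {m : ℕ} (A : Fin (4 + m) → Fin (4 + m) → Fin (4 + m)) (hA : IsLatinSquare A)
    (hz : zc A ≤ 4) (hr : ∀ s t : Fin (4 + m), 4 ≤ (s : ℕ) → mult A s t ≠ 0) :
    ∃ x ∈ canonList (zc A), ∃ A' : Fin (4 + m) → Fin (4 + m) → Fin (4 + m), IsLatinSquare A' ∧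
      (∀ s t, mult A' s t = mvE x.1 s t) ∧ ∀ s, dcnt A' s = dcE x.2 s := by
  have one : ∀ s t : Fin (4 + m), 4 ≤ (s : ℕ) → mult A s t = 1 := fun s t hs =>
    mult_eq_one hA (fun t => hr s t hs) t
  have one' : ∀ s t : Fin (4 + m), 4 ≤ (t : ℕ) → mult A s t = 1 := fun s t hs => by
    rw [mult_symm]; exact one t s hs
  have hdp : ∀ s, dcnt A s ≤ mult A s s ∧ dcnt A s % 2 = mult A s s % 2 := fun s => by
    have := mult_self A s; omega
  have done : ∀ s : Fin (4 + m), 4 ≤ (s : ℕ) → dcnt A s = 1 := fun s hs => by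
    have h1 := hdp s
    rw [one s s hs] at h1
    omega
  let v : Fin 4 → Fin (4 + m) := Fin.castAdd m
  have hrow : ∀ s, mult A s (v 0) + mult A s (v 1) + mult A s (v 2) + mult A s (v 3) = 4 := by
    intro s
    have h1 := mult_row hA s
    rw [Fin.sum_univ_add, Fin.sum_univ_four,
      Finset.sum_congr rfl (fun i _ => one' s (Fin.natAdd 4 i) (by simp))] at h1
    simp at h1
    exact h1
  have hds : dcnt A (v 0) + dcnt A (v 1) + dcnt A (v 2) + dcnt A (v 3) = 4 := by
    have h1 := sum_dcnt A
    rw [Fin.sum_univ_add, Fin.sum_univ_four,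
      Finset.sum_congr rfl (fun i _ => done (Fin.natAdd 4 i) (by simp))] at h1
    simp at h1
    exact h1
  have hcz : ∑ i, ∑ j, (if mult A (v i) (v j) = 0 then 1 else 0) = zc A := by
    have e : ∀ s : Fin (4 + m), 4 ≤ (s : ℕ) → (∑ t, if mult A s t = 0 then 1 else 0) = 0 :=
      fun s hs => Finset.sum_eq_zero fun t _ => by rw [if_neg (hr s t hs)]
    have e' : ∀ s, (∑ t, if mult A s t = 0 then 1 else 0) = ∑ j : Fin 4,
        if mult A s (v j) = 0 then 1 else 0 := fun s => by
      rw [Fin.sum_univ_add, Finset.sum_eq_zero (s := univ) (f := fun i : Fin m =>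
        if mult A s (Fin.natAdd 4 i) = 0 then 1 else 0)
        (fun t _ => by rw [if_neg]; rw [one' s _ (by simp)]; simp)]
      rfl
    rw [zc, Finset.card_filter, Fintype.sum_prod_type, Fin.sum_univ_add,
      Finset.sum_eq_zero (s := univ) (f := fun i : Fin m => ∑ t,
        if mult A (Fin.natAdd 4 i, t).1 (Fin.natAdd 4 i, t).2 = 0 then 1 else 0)
        (fun i _ => e _ (by simp))]
    exact Finset.sum_congr rfl fun i _ => (e' (v i)).symm
  obtain ⟨p, hp, x, hx, hxd, hxE⟩ := core (fun i j => mult A (v i) (v j)) (fun i => dcnt A (v i))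
    (fun i j => mult_symm A _ _) (fun i => hrow (v i)) (fun i => hdp (v i)) hds (zc A) hz
    (zc_ne_one hA) hcz
  obtain ⟨hp4, hpi⟩ := perms4_ok p hp
  let f : Fin (4 + m) → Fin (4 + m) := fun s =>
    if h : (s : ℕ) < 4 then ⟨p.getD s 0, by have := hp4 s h; omega⟩ else s
  have hf1 : ∀ s : Fin (4 + m), (s : ℕ) < 4 → (f s : ℕ) = p.getD s 0 := fun s h => by
    simp only [f, dif_pos h]
  have hf2 : ∀ s : Fin (4 + m), 4 ≤ (s : ℕ) → f s = s := fun s h => by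
    simp only [f, dif_neg (not_lt.2 h)]
  have hfi : Function.Injective f := by
    intro s t hst
    have hv : (f s : ℕ) = f t := by rw [hst]
    by_cases hs : (s : ℕ) < 4
    · by_cases ht : (t : ℕ) < 4
      · rw [hf1 s hs, hf1 t ht] at hv
        exact Fin.ext (hpi s hs t ht hv)
      · rw [hf1 s hs, hf2 t (by omega)] at hv
        have := hp4 s hs
        omega
    · by_cases ht : (t : ℕ) < 4
      · rw [hf1 t ht, hf2 s (by omega)] at hv
        have := hp4 t ht
        omega
      · rwa [hf2 s (by omega), hf2 t (by omega)] at hst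
  let τ : Equiv.Perm (Fin (4 + m)) := Equiv.ofBijective f (Finite.injective_iff_bijective.1 hfi)
  have hτ : ∀ s, τ s = f s := fun s => rfl
  refine ⟨x, hx, renam A (Equiv.refl _) τ, renam_latin hA _ _, fun s t => ?_, fun s => ?_⟩
  · rw [renam_mult, hτ, hτ]
    by_cases hs : (s : ℕ) < 4
    · by_cases ht : (t : ℕ) < 4
      · rw [mvE_lt _ hs ht]
        have e1 : f s = v ⟨p.getD s 0, hp4 s hs⟩ := Fin.ext (hf1 s hs)
        have e2 : f t = v ⟨p.getD t 0, hp4 t ht⟩ := Fin.ext (hf1 t ht)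
        rw [e1, e2]
        exact (hxE s hs t ht _ _ rfl rfl).symm
      · rw [mvE_ge _ (Or.inr (not_lt.1 ht)), hf2 t (by omega)]
        exact one' _ _ (by omega)
    · rw [mvE_ge _ (Or.inl (not_lt.1 hs)), hf2 s (by omega)]
      exact one _ _ (by omega)
  · rw [renam_dcnt, hτ]
    by_cases hs : (s : ℕ) < 4
    · rw [dcE_lt _ hs]
      have e1 : f s = v ⟨p.getD s 0, hp4 s hs⟩ := Fin.ext (hf1 s hs)
      rw [e1]
      exact (hxd s hs _ rfl).symm
    · rw [dcE_ge _ (not_lt.1 hs), hf2 s (by omega)]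
      exact done _ (by omega)

/-- A square with multiplicities and diagonal in normal form. -/
structure Normal {n : ℕ} (E d dgl : List ℕ) (A : Fin n → Fin n → Fin n) : Prop where
  latin : IsLatinSquare A
  hM : ∀ s t, mult A s t = mvE E s t
  hd : ∀ s, dcnt A s = dcE d s
  diag : ∀ i, ((A i i : Fin n) : ℕ) = dgl.getD i 0

theorem norm3 {n : ℕ} (E d dgl : List ℕ) (A : Fin n → Fin n → Fin n) (hA : IsLatinSquare A)
    (hM : ∀ s t, mult A s t = mvE E s t) (hd : ∀ s, dcnt A s = dcE d s)
    (h1 : ∀ i : Fin n, dgl.getD i 0 < n)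
    (h2 : ∀ s : Fin n, (univ.filter fun i : Fin n => dgl.getD i 0 = s).card = dcE d s) :
    ∃ A' : Fin n → Fin n → Fin n, Normal E d dgl A' := by
  obtain ⟨σ, hσ⟩ := exists_perm (fun i => A i i) (fun i => (⟨dgl.getD i 0, h1 i⟩ : Fin n)) (by
    intro s
    have := hd s
    unfold dcnt at this
    rw [this, ← h2 s]
    congr 1
    ext i
    simp [Fin.ext_iff])
  refine ⟨renam A σ (Equiv.refl _), renam_latin hA _ _, fun s t => ?_, fun s => ?_, fun i => ?_⟩
  · rw [renam_mult]; exact hM s t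
  · rw [renam_dcnt]; exact hd s
  · have := hσ i
    simp only [Fin.ext_iff] at this
    exact this

theorem beq_false {a b : ℕ} (h : a ≠ b) : Nat.beq a b = false := by
  cases hb : Nat.beq a b
  · rfl
  · exact absurd (Nat.eq_of_beq_eq_true hb) h

theorem Normal.fits {n : ℕ} {E d dgl : List ℕ} {A : Fin n → Fin n → Fin n} (N : Normal E d dgl A)
    (h8 : n ≤ 8) (h0 : 2 ≤ n) (al : ℕ → ℕ → ℕ → ℕ → Bool)
    (hal : ∀ i j : Fin n, i < j → al i j (A i j) (A j i) = true) :
    Fits (mkProb n E d dgl al) n A where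
  hn := rfl
  h8 := h8
  h0 := h0
  latin := N.latin
  diag := N.diag
  hforb := by
    intro i j hij
    change cond (Nat.beq (A i j) (A j i)) (Nat.ble (mvE E (A i j) (A i j)) (dcE d (A i j)))
      (Nat.beq (mvE E (A i j) (A j i)) 0) = false
    by_cases h : A i j = A j i
    · rw [← h, Nat.beq_refl, cond_true]
      apply ble_false
      rw [← N.hM, ← N.hd, mult_self]
      have : (univ.filter fun q : Fin n × Fin n => q.1 < q.2 ∧ A q.1 q.2 = A i j ∧
        A q.2 q.1 = A i j).card ≠ 0 := by
        rw [Finset.card_ne_zero]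
        exact ⟨(i, j), by simp [hij, h.symm]⟩
      omega
    · rw [beq_false (fun e => h (Fin.ext e)), cond_false]
      apply beq_false
      rw [← N.hM]
      exact mult_pos.2 ⟨i, j, rfl, rfl⟩
  hex := by
    intro i j i' j' hx h1 h2
    change cond (Nat.beq (A i j) (A j i)) false (Nat.beq (mvE E (A i j) (A j i)) 1) = true at hx
    cases hb : Nat.beq (A i j) (A j i)
    · rw [hb, cond_false] at hx
      have h := Nat.eq_of_beq_eq_true hx
      rw [← N.hM] at h
      have := Finset.card_le_one.1 (le_of_eq h) (i', j') (by simp [h1, h2]) (i, j) (by simp)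
      simpa using this
    · rw [hb] at hx; cases hx
  hneed := by
    intro s t hx
    change cond (Nat.beq s t) false (cond (Nat.beq (mvE E s t) 0) false true) = true at hx
    cases hb : Nat.beq s t
    · rw [hb, cond_false] at hx
      cases hb2 : Nat.beq (mvE E s t) 0
      · have h := Nat.ne_of_beq_eq_false hb2
        rw [← N.hM] at h
        obtain ⟨i, j, h1, h2⟩ := mult_pos.1 h
        refine ⟨i, j, ?_, h1, h2⟩
        rintro rfl
        have e : s = t := h1.symm.trans h2
        rw [e, Nat.beq_refl] at hb
        cases hb
      · rw [hb2] at hx; cases hx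
    · rw [hb] at hx; cases hx
  hallow := hal

end RSO

namespace RSO

open Finset

theorem six_aux (_z : ℕ) (E d dgl : List ℕ) (h : List ℕ) (dep root : ℕ)
    (hr : run (mkProb 6 E d dgl al6) dep root h = true)
    (A : Fin 6 → Fin 6 → Fin 6) (hA : IsLatinSquare A)
    (hM : ∀ s t, mult A s t = mvE E s t) (hd : ∀ s, dcnt A s = dcE d s)
    (h1 : ∀ i : Fin 6, dgl.getD i 0 < 6)
    (h2 : ∀ s : Fin 6, (univ.filter fun i : Fin 6 => dgl.getD i 0 = s).card = dcE d s) : False := by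
  obtain ⟨A', N⟩ := norm3 E d dgl A hA hM hd h1 h2
  exact chk_sound (N.fits (by norm_num) (by norm_num) al6 (fun _ _ _ => rfl)) dep root h hr

theorem order_six (A : Fin 6 → Fin 6 → Fin 6) (hA : IsLatinSquare A) (hz : zc A ≤ 4) : False := by
  obtain ⟨A1, hA1, hz1, hr1⟩ := norm1 (m := 2) A hA hz
  obtain ⟨x, hx, A2, hA2, hM, hd⟩ := norm2 (m := 2) A1 hA1 (hz1 ▸ hz) hr1
  have hne := zc_ne_one hA1
  rw [← hz1] at hz
  generalize zc A1 = z at hx hz hne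
  interval_cases z
  · simp only [canonList, List.mem_cons, List.not_mem_nil, or_false] at hx
    subst hx
    exact six_aux 0 _ _ _ _ _ _ chk_6_0_0 A2 hA2 hM hd (by decide) (by decide)
  · exact hne rfl
  · simp only [canonList, List.mem_cons, List.not_mem_nil, or_false] at hx
    subst hx
    exact six_aux 2 _ _ _ _ _ _ chk_6_2_0 A2 hA2 hM hd (by decide) (by decide)
  · simp only [canonList, List.mem_cons, List.not_mem_nil, or_false] at hx
    subst hx
    exact six_aux 3 _ _ _ _ _ _ chk_6_3_0 A2 hA2 hM hd (by decide) (by decide)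
  · simp only [canonList, List.mem_cons, List.not_mem_nil, or_false] at hx
    rcases hx with hx | hx | hx | hx | hx | hx | hx | hx
    · subst hx; exact six_aux 4 _ _ _ _ _ _ chk_6_4_0 A2 hA2 hM hd (by decide) (by decide)
    · subst hx; exact six_aux 4 _ _ _ _ _ _ chk_6_4_1 A2 hA2 hM hd (by decide) (by decide)
    · subst hx; exact six_aux 4 _ _ _ _ _ _ chk_6_4_2 A2 hA2 hM hd (by decide) (by decide)
    · subst hx; exact six_aux 4 _ _ _ _ _ _ chk_6_4_3 A2 hA2 hM hd (by decide) (by decide)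
    · subst hx; exact six_aux 4 _ _ _ _ _ _ chk_6_4_4 A2 hA2 hM hd (by decide) (by decide)
    · subst hx; exact six_aux 4 _ _ _ _ _ _ chk_6_4_5 A2 hA2 hM hd (by decide) (by decide)
    · subst hx; exact six_aux 4 _ _ _ _ _ _ chk_6_4_6 A2 hA2 hM hd (by decide) (by decide)
    · subst hx; exact six_aux 4 _ _ _ _ _ _ chk_6_4_7 A2 hA2 hM hd (by decide) (by decide)

end RSO

namespace RSO

open Finset

abbrev E7 : List ℕ := [2, 1, 1, 0, 1, 1, 1, 1, 1, 1, 0, 2, 0, 1, 2, 1]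
abbrev d7 : List ℕ := [2, 1, 0, 1]
abbrev dgl7 : List ℕ := [0, 1, 0, 3, 4, 5, 6]

/-- Symmetries of the normal form: the effect on symbols. -/
def tau (x y : Fin 7) : Equiv.Perm (Fin 7) := Equiv.swap 1 x * Equiv.swap 4 y

/-- Symmetries of the normal form: the effect on positions. -/
def sig (w x y : Fin 7) : Equiv.Perm (Fin 7) := Equiv.swap 0 w * tau x y

theorem sym7 : ∀ w ∈ ({0, 2} : Finset (Fin 7)), ∀ x ∈ ({1, 4, 5, 6} : Finset (Fin 7)),
    ∀ y ∈ ({1, 4, 5, 6} : Finset (Fin 7)),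
    (∀ s t : Fin 7, mvE E7 (tau x y s) (tau x y t) = mvE E7 s t) ∧
    (∀ s : Fin 7, dcE d7 (tau x y s) = dcE d7 s) ∧
    (∀ i u : Fin 7, (u : ℕ) = dgl7.getD i 0 → dgl7.getD (sig w x y i) 0 = (tau x y u : Fin 7)) ∧
    sig w x y 3 = 3 ∧ tau x y 2 = 2 := by decide +kernel

theorem orb7 : ∀ c r : Fin 7, c ≠ 3 → r ≠ 3 → c ≠ r →
    ∃ w ∈ ({0, 2} : Finset (Fin 7)), ∃ x ∈ ({1, 4, 5, 6} : Finset (Fin 7)),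
    ∃ y ∈ ({1, 4, 5, 6} : Finset (Fin 7)),
    (sig w x y 0 = c ∧ sig w x y 2 = r) ∨ (sig w x y 0 = c ∧ sig w x y 1 = r) ∨
    (sig w x y 0 = r ∧ sig w x y 1 = c) ∨ (sig w x y 1 = c ∧ sig w x y 4 = r) := by
  decide +kernel

theorem Normal.renam7 {A : Fin 7 → Fin 7 → Fin 7} (N : Normal E7 d7 dgl7 A) {w x y : Fin 7}
    (hw : w ∈ ({0, 2} : Finset (Fin 7))) (hx : x ∈ ({1, 4, 5, 6} : Finset (Fin 7)))
    (hy : y ∈ ({1, 4, 5, 6} : Finset (Fin 7))) :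
    Normal E7 d7 dgl7 (renam A (sig w x y) (tau x y)) := by
  obtain ⟨h1, h2, h3, h4, h5⟩ := sym7 w hw x hx y hy
  refine ⟨renam_latin N.latin _ _, fun s t => ?_, fun s => ?_, fun i => ?_⟩
  · rw [renam_mult, N.hM, h1]
  · rw [renam_dcnt, N.hd, h2]
  · have hlt : ∀ i : Fin 7, dgl7.getD i 0 < 7 := by decide
    have e : A (sig w x y i) (sig w x y i) = tau x y ⟨dgl7.getD i 0, hlt i⟩ :=
      Fin.ext ((N.diag _).trans (h3 i _ rfl))
    unfold renam
    rw [e, Equiv.symm_apply_apply]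

theorem Normal.transp {A : Fin 7 → Fin 7 → Fin 7} (N : Normal E7 d7 dgl7 A) :
    Normal E7 d7 dgl7 (fun i j => A j i) := by
  refine ⟨⟨N.latin.2, N.latin.1⟩, fun s t => ?_, N.hd, N.diag⟩
  rw [← N.hM, mult_symm A]
  unfold mult
  congr 1
  ext q
  simp only [Finset.mem_filter, Finset.mem_univ, true_and]
  exact and_comm

theorem cond_lem {s j c : ℕ} (h : s = 2 ↔ j = c) :
    cond (Nat.beq s 2) (Nat.beq j c) (cond (Nat.beq j c) false true) = true := by
  by_cases hj : j = c
  · rw [h.2 hj, hj, Nat.beq_refl, Nat.beq_refl]; rfl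
  · rw [beq_false hj, beq_false (fun e => hj (h.1 e))]; rfl

theorem Normal.no7 {A : Fin 7 → Fin 7 → Fin 7} (N : Normal E7 d7 dgl7 A) (c r : Fin 7)
    (hc : A 3 c = 2) (hr : A r 3 = 2) (hts : List ℕ) (root : ℕ)
    (h : run (mkProb 7 E7 d7 dgl7 (al7 c r)) 9 root hts = true) : False := by
  refine chk_sound (N.fits (by norm_num) (by norm_num) (al7 c r) ?_) 9 root hts h
  have k1 : ∀ j : Fin 7, ((A 3 j : Fin 7) : ℕ) = 2 ↔ (j : ℕ) = c := fun j => by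
    rw [← Fin.ext_iff, ← (N.latin.1 3).1.eq_iff (a := j) (b := c)]
    simp only [hc, Fin.ext_iff]; rfl
  have k2 : ∀ j : Fin 7, ((A j 3 : Fin 7) : ℕ) = 2 ↔ (j : ℕ) = r := fun j => by
    rw [← Fin.ext_iff, ← (N.latin.2 3).1.eq_iff (a := j) (b := r)]
    simp only [hr, Fin.ext_iff]; rfl
  intro i j hij
  unfold al7
  by_cases hi : i = 3
  · subst hi
    rw [cond_lem (k1 j), cond_lem (k2 j)]
    rfl
  · rw [beq_false (show (i : ℕ) ≠ 3 from fun e => hi (Fin.ext e))]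
    by_cases hj : j = 3
    · subst hj
      rw [cond_lem (k1 i), cond_lem (k2 i)]
      rfl
    · rw [beq_false (show (j : ℕ) ≠ 3 from fun e => hj (Fin.ext e))]
      rfl

theorem order_seven (A : Fin 7 → Fin 7 → Fin 7) (hA : IsLatinSquare A) (hz : zc A = 3) : False := by
  obtain ⟨A1, hA1, hz1, hr1⟩ := norm1 (m := 3) A hA (by omega)
  rw [hz] at hz1
  obtain ⟨x, hx, A2, hA2, hM, hd⟩ := norm2 (m := 3) A1 hA1 (by omega) hr1
  rw [hz1] at hx
  simp only [canonList, List.mem_cons, List.not_mem_nil, or_false] at hx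
  subst hx
  obtain ⟨A3, N⟩ := norm3 (n := 7) E7 d7 dgl7 A2 hA2 hM hd (by decide) (by decide)
  obtain ⟨c, hc⟩ := (N.latin.1 3).2 2
  obtain ⟨r, hr⟩ := (N.latin.2 3).2 2
  have h33 : A3 3 3 = 3 := Fin.ext (N.diag 3)
  have hc3 : c ≠ 3 := by rintro rfl; exact absurd (h33.symm.trans hc) (by decide)
  have hr3 : r ≠ 3 := by rintro rfl; exact absurd (h33.symm.trans hr) (by decide)
  have hcr : c ≠ r := by
    rintro rfl
    exact mult_pos.2 ⟨3, c, hc, hr⟩ (N.hM 2 2)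
  simp only at hc hr
  obtain ⟨w, hw, x, hx, y, hy, H⟩ := orb7 c r hc3 hr3 hcr
  have N' := N.renam7 hw hx hy
  obtain ⟨-, -, -, h4, h5⟩ := sym7 w hw x hx y hy
  have R : ∀ j, A3 3 (sig w x y j) = 2 → renam A3 (sig w x y) (tau x y) 3 j = 2 := fun j e => by
    unfold renam; rw [h4, e, Equiv.symm_apply_eq, h5]
  have C : ∀ j, A3 (sig w x y j) 3 = 2 → renam A3 (sig w x y) (tau x y) j 3 = 2 := fun j e => by
    unfold renam; rw [h4, e, Equiv.symm_apply_eq, h5]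
  rcases H with ⟨a, b⟩ | ⟨a, b⟩ | ⟨a, b⟩ | ⟨a, b⟩
  · exact N'.no7 0 2 (R _ (a ▸ hc)) (C _ (b ▸ hr)) _ _ chk_7_0_2
  · exact N'.no7 0 1 (R _ (a ▸ hc)) (C _ (b ▸ hr)) _ _ chk_7_0_1
  · exact N'.transp.no7 0 1 (C _ (a ▸ hr)) (R _ (b ▸ hc)) _ _ chk_7_0_1
  · exact N'.no7 1 4 (R _ (a ▸ hc)) (C _ (b ▸ hr)) _ _ chk_7_1_4

end RSO

/-! ## Orders up to 5 -/

namespace RSO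

open Finset

/-- Words of length `k` without repetition over `0,...,n-1`. -/
def words (n : ℕ) : ℕ → List (List ℕ)
  | 0 => [[]]
  | k + 1 => (List.range n).flatMap fun a =>
      ((words n k).filter fun l => !(l.elem a)).map fun l => a :: l

def compat : List ℕ → List ℕ → Bool
  | a :: l, b :: m => cond (Nat.beq a b) false (compat l m)
  | _, _ => true

/-- The set of the entries of a list as a bit mask. -/
def mask : List ℕ → ℕ
  | [] => 0
  | a :: l => Nat.lor (Nat.pow 2 a) (mask l)

def popc (M : ℕ) : ℕ → ℕ
  | 0 => 0
  | k + 1 => Nat.add (Nat.mod (Nat.div M (Nat.pow 2 k)) 2) (popc M k)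

def codes (n : ℕ) (L : List (List ℕ)) : List ℕ :=
  (List.range n).flatMap fun i => (List.range n).map fun j =>
    n * (L.getD i []).getD j 0 + (L.getD j []).getD i 0

/-- Extend `acc` by `k` rows in all possible ways; none gives a value in `bad`. -/
noncomputable def extend (n : ℕ) (bad : List ℕ) : ℕ → List (List ℕ) → List (List ℕ) → Bool
  | 0, _, acc => force (mask (codes n acc.reverse)) fun M => force (popc M (n * n)) fun c => !(bad.elem c)
  | k + 1, cands, acc => cands.all fun r => extend n bad k (cands.filter (compat r)) (r :: acc)

noncomputable def small (n : ℕ) (bad : List ℕ) : Bool :=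
  extend n bad (n - 1) ((words n n).filter (compat (List.range n))) [List.range n]

theorem small2 : small 2 [4] = true := by decide +kernel
theorem small3 : small 3 [5, 6, 7, 9] = true := by decide +kernel
theorem small4 : small 4 [6, 7, 8, 10, 11, 12, 13, 14] = true := by decide +kernel
theorem small5 : small 5 [8, 9, 12, 16, 18, 20, 22, 23] = true := by decide +kernel

end RSO

namespace RSO

open Finset

theorem testBit_mask (l : List ℕ) (k : ℕ) : (mask l).testBit k = decide (k ∈ l) := by
  induction l with
  | nil => simp [mask]
  | cons a l ih =>
    change ((2 ^ a) ||| mask l).testBit k = _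
    rw [Nat.testBit_lor, ih, Nat.testBit_two_pow]
    by_cases h : a = k
    · simp [h]
    · simp [h, Ne.symm h]

theorem popc_eq (M k : ℕ) : popc M k = ((range k).filter fun i => M.testBit i = true).card := by
  induction k with
  | zero => simp [popc]
  | succ k ih =>
    change M / 2 ^ k % 2 + popc M k = _
    rw [ih, Finset.range_add_one, Finset.filter_insert]
    have h := Nat.testBit_eq_decide_div_mod_eq (x := M) (i := k)
    split_ifs with hb
    · rw [Finset.card_insert_of_notMem (by simp)]
      rw [hb] at h
      have := of_decide_eq_true h.symm
      omega
    · rw [Bool.not_eq_true] at hb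
      rw [hb] at h
      have := of_decide_eq_false h.symm
      omega

section
variable {n : ℕ} (A : Fin n → Fin n → Fin n)

/-- Row `i` of a square as a list. -/
def rowL (i : ℕ) : List ℕ :=
  if h : i < n then List.ofFn fun j => ((A ⟨i, h⟩ j : Fin n) : ℕ) else []

def accR : ℕ → List (List ℕ)
  | 0 => []
  | m + 1 => rowL A m :: accR m

theorem accR_reverse (m : ℕ) : (accR A m).reverse = (List.range m).map (rowL A) := by
  induction m with
  | zero => rfl
  | succ m ih => rw [accR, List.reverse_cons, ih, List.range_succ, List.map_append]; rfl

theorem rowL_getD (i j : Fin n) : (rowL A i).getD j 0 = A i j := by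
  unfold rowL
  rw [dif_pos i.2, List.getD_eq_getElem _ _ (by simp)]
  simp

theorem accR_getD (i : Fin n) : ((accR A n).reverse).getD i [] = rowL A i := by
  rw [accR_reverse, List.getD_eq_getElem _ _ (by simp)]
  simp

theorem mem_codes (k : ℕ) : k ∈ codes n (accR A n).reverse ↔
    ∃ i j : Fin n, k = n * (A i j : ℕ) + (A j i : ℕ) := by
  unfold codes
  simp only [List.mem_flatMap, List.mem_map, List.mem_range]
  constructor
  · rintro ⟨i, hi, j, hj, rfl⟩
    refine ⟨⟨i, hi⟩, ⟨j, hj⟩, ?_⟩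
    have h1 := accR_getD A ⟨i, hi⟩
    have h2 := accR_getD A ⟨j, hj⟩
    have h3 := rowL_getD A ⟨i, hi⟩ ⟨j, hj⟩
    have h4 := rowL_getD A ⟨j, hj⟩ ⟨i, hi⟩
    simp only at h1 h2 h3 h4
    rw [h1, h2, h3, h4]
  · rintro ⟨i, j, rfl⟩
    refine ⟨i, i.2, j, j.2, ?_⟩
    rw [accR_getD, accR_getD, rowL_getD, rowL_getD]

theorem popc_codes : popc (mask (codes n (accR A n).reverse)) (n * n) =
    orthCount A (fun i j => A j i) := by
  rw [popc_eq]
  unfold orthCount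
  symm
  refine Finset.card_bij (fun q _ => n * (q.1 : ℕ) + (q.2 : ℕ)) ?_ ?_ ?_
  · intro q hq
    obtain ⟨⟨i, j⟩, -, rfl⟩ := Finset.mem_image.1 hq
    simp only [Finset.mem_filter, Finset.mem_range, testBit_mask, decide_eq_true_eq, mem_codes]
    refine ⟨?_, i, j, rfl⟩
    have h1 := (A i j).2
    have h2 := (A j i).2
    calc n * (A i j : ℕ) + (A j i : ℕ) < n * (A i j : ℕ) + n := by omega
      _ = n * ((A i j : ℕ) + 1) := by ring
      _ ≤ n * n := Nat.mul_le_mul_left _ h1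
  · rintro ⟨a, b⟩ _ ⟨c, d⟩ _ h
    simp only at h
    have hn : 0 < n := a.pos
    have h1 : (n * (a : ℕ) + b) / n = (n * (c : ℕ) + d) / n := by rw [h]
    have h2 : (n * (a : ℕ) + b) % n = (n * (c : ℕ) + d) % n := by rw [h]
    rw [Nat.mul_add_div hn, Nat.mul_add_div hn, Nat.div_eq_of_lt b.2, Nat.div_eq_of_lt d.2] at h1
    rw [Nat.mul_add_mod, Nat.mul_add_mod, Nat.mod_eq_of_lt b.2, Nat.mod_eq_of_lt d.2] at h2
    exact Prod.ext (Fin.ext (by simpa using h1)) (Fin.ext h2)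
  · intro k hk
    simp only [Finset.mem_filter, Finset.mem_range, testBit_mask, decide_eq_true_eq,
      mem_codes] at hk
    obtain ⟨-, i, j, rfl⟩ := hk
    exact ⟨(A i j, A j i), Finset.mem_image.2 ⟨(i, j), Finset.mem_univ _, rfl⟩, rfl⟩

theorem compat_ofFn : ∀ {m : ℕ} (f g : Fin m → ℕ), (∀ i, f i ≠ g i) →
    compat (List.ofFn f) (List.ofFn g) = true
  | 0, f, g, _ => by simp [compat]
  | m + 1, f, g, h => by
    rw [List.ofFn_succ, List.ofFn_succ, compat, beq_false (h 0), cond_false]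
    exact compat_ofFn _ _ fun i => h i.succ

theorem mem_words : ∀ (k : ℕ) (f : Fin k → ℕ), (∀ i, f i < n) → Function.Injective f →
    List.ofFn f ∈ words n k
  | 0, f, _, _ => by simp [words]
  | k + 1, f, h, hi => by
    rw [List.ofFn_succ, words]
    refine List.mem_flatMap.2 ⟨f 0, List.mem_range.2 (h 0), List.mem_map.2 ⟨_, ?_, rfl⟩⟩
    refine List.mem_filter.2 ⟨mem_words k _ (fun i => h i.succ)
      (fun a b e => Fin.succ_injective _ (hi e)), ?_⟩
    rw [Bool.not_eq_true', ← Bool.not_eq_true, List.elem_iff, List.mem_ofFn]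
    rintro ⟨i, e⟩
    exact absurd (hi e) (Fin.succ_ne_zero i)

theorem extend_sound (bad : List ℕ)
    (hc : ∀ i j, i < j → j < n → compat (rowL A i) (rowL A j) = true) :
    ∀ (k m : ℕ) (cands : List (List ℕ)), m + k = n → (∀ i, m ≤ i → i < n → rowL A i ∈ cands) →
    extend n bad k cands (accR A m) = true → orthCount A (fun i j => A j i) ∉ bad
  | 0, m, cands, hm, _, h => by
    rw [Nat.add_zero] at hm
    subst hm
    rw [extend, force_eq, force_eq, popc_codes] at h
    intro hb
    rw [List.elem_eq_true_of_mem hb] at h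
    cases h
  | k + 1, m, cands, hm, hmem, h => by
    rw [extend, List.all_eq_true] at h
    have h1 := h (rowL A m) (hmem m le_rfl (by omega))
    refine extend_sound bad hc k (m + 1) _ (by omega) (fun i hi hn => ?_) h1
    exact List.mem_filter.2 ⟨hmem i (by omega) hn, hc m i (by omega) hn⟩

end

theorem small_sound {n : ℕ} (hn : 0 < n) (bad : List ℕ) (h : small n bad = true)
    (A : Fin n → Fin n → Fin n) (hA : IsLatinSquare A) :
    orthCount A (fun i j => A j i) ∉ bad := by
  let τ : Equiv.Perm (Fin n) := Equiv.ofBijective _ (hA.1 ⟨0, hn⟩)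
  have hτ : ∀ j, τ j = A ⟨0, hn⟩ j := fun j => rfl
  let B := renam A (Equiv.refl _) τ
  have hB : IsLatinSquare B := renam_latin hA _ _
  have hB0 : ∀ j, B ⟨0, hn⟩ j = j := fun j => by
    change τ.symm (A ⟨0, hn⟩ j) = j
    rw [← hτ, Equiv.symm_apply_apply]
  have e : orthCount A (fun i j => A j i) = orthCount B (fun i j => B j i) := by
    have h1 := orth_add_zc A
    have h2 := orth_add_zc B
    have h3 : zc B = zc A := renam_zc _ _ _
    omega
  rw [e]
  have hr0 : rowL B 0 = List.range n := by
    unfold rowL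
    rw [dif_pos hn]
    simp only [hB0]
    apply List.ext_getElem <;> simp
  have hcomp : ∀ i j, i < j → j < n → compat (rowL B i) (rowL B j) = true := by
    intro i j hij hj
    unfold rowL
    rw [dif_pos (hij.trans hj), dif_pos hj]
    refine compat_ofFn _ _ fun c hc => ?_
    have := (hB.2 c).1 (Fin.ext hc)
    simp only [Fin.mk.injEq] at this
    omega
  refine extend_sound B bad hcomp (n - 1) 1
    ((words n n).filter (compat (List.range n))) (by omega) (fun i hi hin => ?_) ?_
  · refine List.mem_filter.2 ⟨?_, ?_⟩
    · unfold rowL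
      rw [dif_pos hin]
      exact mem_words n _ (fun j => (B ⟨i, hin⟩ j).2) fun a b hab => (hB.1 ⟨i, hin⟩).1 (Fin.ext hab)
    · rw [← hr0]; exact hcomp 0 i (by omega) hin
  · rw [accR, accR, hr0]; exact h

end RSO

theorem r_self_orthogonal_necessary (n : ℕ) (hn : 1 ≤ n) (r : ℕ)
    (h : ∃ A : Fin n → Fin n → Fin n,
        IsLatinSquare A ∧ orthCount A (fun i j => A j i) = r) :
    n ≤ r ∧ r ≤ n ^ 2 ∧ r ≠ n + 1 ∧ r ≠ n ^ 2 - 1 ∧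
      (n, r) ∉ ({(2, 4), (3, 5), (3, 6), (3, 7), (3, 9), (4, 6), (4, 7), (4, 8), (4, 10),
        (4, 11), (4, 12), (4, 13), (4, 14), (5, 8), (5, 9), (5, 12), (5, 16), (5, 18),
        (5, 20), (5, 22), (5, 23), (6, 32), (6, 33), (6, 34), (6, 36), (7, 46)} :
        Set (ℕ × ℕ)) := by
  obtain ⟨A, hA, hr⟩ := h
  obtain ⟨g1, g2, g3, g4⟩ := RSO.general hA hn
  rw [hr] at g1 g2 g3 g4
  refine ⟨g1, g2, g3, g4, fun hmem => ?_⟩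
  simp only [Set.mem_insert_iff, Set.mem_singleton_iff, Prod.mk.injEq] at hmem
  have hz := RSO.orth_add_zc A
  rw [hr] at hz
  have hle : n ≤ 7 := by omega
  have hge : 2 ≤ n := by omega
  interval_cases n
  · have h := RSO.small_sound (by norm_num) _ RSO.small2 A hA
    rw [hr] at h
    simp only [List.mem_cons, List.not_mem_nil] at h
    omega
  · have h := RSO.small_sound (by norm_num) _ RSO.small3 A hA
    rw [hr] at h
    simp only [List.mem_cons, List.not_mem_nil] at h
    omega
  · have h := RSO.small_sound (by norm_num) _ RSO.small4 A hA
    rw [hr] at h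
    simp only [List.mem_cons, List.not_mem_nil] at h
    omega
  · have h := RSO.small_sound (by norm_num) _ RSO.small5 A hA
    rw [hr] at h
    simp only [List.mem_cons, List.not_mem_nil] at h
    omega
  · exact RSO.order_six A hA (by omega)
  · exact RSO.order_seven A hA (by omega)
end
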